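/- arXiv:quant-ph/0702008 — 8 statements merged into one kernel-verified Lean document; each statement's English description precedes it below -/
import Mathlib

section
/- (Fortuin–Kasteleyn representation of the Potts model.) Let G = (V,E) be a finite simple graph, let q be a positive integer, and let v : E → ℂ assign a complex weight v_e to each edge. Then Σ_{σ : V → {1,…,q}} Π_{e = {a,b} ∈ E} (1 + v_e · [σ(a) = σ(b)]) = Σ_{A ⊆ E} q^{k(A)} Π_{e ∈ A} v_e, where [σ(a) = σ(b)] is 1 if the two endpoints of e receive the same color and 0 otherwise. -/
/-- The number of connected components of the graph on `V` with edge set `A`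
(isolated vertices count as components). -/
noncomputable def numComponents {V : Type*} (A : Set (Sym2 V)) : ℕ :=
  Nat.card (SimpleGraph.fromEdgeSet A).ConnectedComponent

/-!
Expand the product over the edges: each `A ⊆ E` contributes `∏ e ∈ A, v e` once for every coloring
in which all edges of `A` are monochromatic. Such a coloring is a function on the vertices that
factors through the connected components of `(V, A)`, so there are `q ^ k(A)` of them.
-/

section Colorings

variable {V C : Type*}

theorem reachableSetoid_fromEdgeSet_le_ker_iff {A : Set (Sym2 V)} {σ : V → C} :
    (SimpleGraph.fromEdgeSet A).reachableSetoid ≤ Setoid.ker σ ↔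
      ∀ e ∈ A, (e.map σ).IsDiag := by
  constructor
  · intro h e
    induction e with | _ a b =>
    intro hab
    have hreach : (SimpleGraph.fromEdgeSet A).Reachable a b := by
      rw [SimpleGraph.reachable_fromEdgeSet_eq_reflTransGen_toRel]
      exact .single hab
    exact h hreach
  · intro h a b hreach
    change (SimpleGraph.fromEdgeSet A).Reachable a b at hreach
    rw [SimpleGraph.reachable_fromEdgeSet_eq_reflTransGen_toRel] at hreach
    have hedge : ∀ x y, Sym2.ToRel A x y → σ x = σ y := fun x y hxy => h s(x, y) hxy
    have hcolor : Relation.ReflTransGen Eq (σ a) (σ b) := hreach.lift σ hedge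
    rwa [Relation.reflTransGen_eq_self] at hcolor

theorem natCard_forall_mem_isDiag_map [Finite V] (A : Set (Sym2 V)) :
    Nat.card {σ : V → C // ∀ e ∈ A, (e.map σ).IsDiag} = Nat.card C ^ numComponents A := by
  let H := SimpleGraph.fromEdgeSet A
  calc
    Nat.card {σ : V → C // ∀ e ∈ A, (e.map σ).IsDiag}
      = Nat.card {σ : V → C // H.reachableSetoid ≤ Setoid.ker σ} :=
        Nat.card_congr <|
          Equiv.subtypeEquivRight fun _ => reachableSetoid_fromEdgeSet_le_ker_iff.symm
    _ = Nat.card (H.ConnectedComponent → C) := Nat.card_congr (Setoid.liftEquiv H.reachableSetoid)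
    _ = Nat.card C ^ numComponents A := Nat.card_fun

end Colorings

theorem sum_prod_one_add_mul_boole {ι κ R : Type*} [Fintype κ] [CommSemiring R]
    (s : Finset ι) (f : ι → R) (p : κ → ι → Prop) [∀ k, DecidablePred (p k)] :
    ∑ k, ∏ i ∈ s, (1 + f i * if p k i then 1 else 0) =
      ∑ t ∈ s.powerset, (Nat.card {k // ∀ i ∈ t, p k i} : R) * ∏ i ∈ t, f i := by
  calc
    ∑ k, ∏ i ∈ s, (1 + f i * if p k i then 1 else 0)
      = ∑ k, ∑ t ∈ s.powerset, if ∀ i ∈ t, p k i then ∏ i ∈ t, f i else 0 := by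
        simp only [mul_ite, mul_one, mul_zero, Finset.prod_one_add, Finset.prod_ite_zero]
    _ = ∑ t ∈ s.powerset, ∑ k, if ∀ i ∈ t, p k i then ∏ i ∈ t, f i else 0 := Finset.sum_comm
    _ = ∑ t ∈ s.powerset, (Nat.card {k // ∀ i ∈ t, p k i} : R) * ∏ i ∈ t, f i := by
        simp only [← Finset.sum_filter, Finset.sum_const, nsmul_eq_mul,
          Nat.card_eq_fintype_card, Fintype.card_subtype]

-- A loop in `E` is always monochromatic, and does not change the components of `(V, A)`.
theorem stmt1_general {V C R : Type*} [Fintype V] [DecidableEq V] [Fintype C] [DecidableEq C]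
    [CommSemiring R] (E : Finset (Sym2 V)) (v : Sym2 V → R) :
    ∑ σ : V → C, ∏ e ∈ E, (1 + v e * if (e.map σ).IsDiag then 1 else 0) =
      ∑ A ∈ E.powerset,
        (Fintype.card C : R) ^ numComponents (A : Set (Sym2 V)) * ∏ e ∈ A, v e := by
  rw [sum_prod_one_add_mul_boole]
  refine Finset.sum_congr rfl fun A _ => ?_
  have hcard := natCard_forall_mem_isDiag_map (C := C) (A : Set (Sym2 V))
  simp only [Finset.mem_coe] at hcard
  rw [hcard, Nat.cast_pow, Nat.card_eq_fintype_card]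

/-- Fortuin–Kasteleyn representation of the Potts partition function:
`Σ_σ Π_{e∈E} (1 + v_e [σ const on e]) = Σ_{A⊆E} q^{k(A)} Π_{e∈A} v_e`. -/
theorem stmt1 {V : Type*} [Fintype V] [DecidableEq V] (G : SimpleGraph V)
    [DecidableRel G.Adj] (q : ℕ) (hq : 0 < q) (v : Sym2 V → ℂ) :
    ∑ σ : V → Fin q, ∏ e ∈ G.edgeFinset,
        (1 + v e * (if Sym2.IsDiag (Sym2.map σ e) then 1 else 0)) =
      ∑ A ∈ G.edgeFinset.powerset,
        (q : ℂ) ^ numComponents (A : Set (Sym2 V)) * ∏ e ∈ A, v e := by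
  simpa only [Fintype.card_fin] using stmt1_general (C := Fin q) G.edgeFinset v
end

section
/- Let H be a nonzero finite-dimensional complex inner product space and let M : H → H be a nonzero linear map, with ‖M‖ its operator norm. Then there exist a unitary map (linear isometry equivalence) U of H × H (with the product inner product) and a linear map γ : H → H such that for every α ∈ H, U(α, 0) = (‖M‖⁻¹ • M α, γ α). In particular, projecting the second (ancilla) component onto 0 recovers the normalized operator M/‖M‖ applied to α. -/
/-!
Every self-adjoint contraction `B` on a Hilbert space is the real part of a unitary, namely of
`B + i √(1 - B²)`. Given a contraction `T : E → F`, apply this to the operator matrix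
`B = [[0, T†], [T, 0]]` on `E ⊕ F`. Since `B² = diag (T†T, TT†)` commutes with the projection onto
`E ⊕ 0`, so does `√(1 - B²)`, and the unitary therefore sends `(α, 0)` to `(γ α, T α)`; exchanging
the two summands gives the dilation. A nonzero `M` becomes a contraction after division by `‖M‖`.
-/

open ContinuousLinearMap Complex WithLp

section WithLp

variable {p : ENNReal} {𝕜 E F : Type*} [Semiring 𝕜]
  [AddCommGroup E] [Module 𝕜 E] [TopologicalSpace E]
  [AddCommGroup F] [Module 𝕜 F] [TopologicalSpace F]

variable (p 𝕜 E F) in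
/-- The inclusion `x ↦ (x, 0)` of the first summand of the `Lᵖ` direct sum `E ⊕ F`. -/
noncomputable def lpInl : E →L[𝕜] WithLp p (E × F) :=
  (prodContinuousLinearEquiv p 𝕜 E F).symm ∘L inl 𝕜 E F

variable (p 𝕜 E F) in
/-- The projection `(x, y) ↦ (x, 0)` of the `Lᵖ` direct sum `E ⊕ F` onto its first summand, as an
operator on `E ⊕ F`. -/
noncomputable def lpProjFst : WithLp p (E × F) →L[𝕜] WithLp p (E × F) :=
  lpInl p 𝕜 E F ∘L fstL p 𝕜 E F

@[simp]
theorem lpProjFst_apply (z : WithLp p (E × F)) : lpProjFst p 𝕜 E F z = toLp p (z.fst, 0) := rfl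

theorem snd_apply_toLp_zero_of_commute {S : WithLp p (E × F) →L[𝕜] WithLp p (E × F)}
    (hS : Commute S (lpProjFst p 𝕜 E F)) (x : E) : (S (toLp p (x, 0))).snd = 0 := by
  have h : S (toLp p (x, 0)) = toLp p ((S (toLp p (x, 0))).fst, 0) := by
    simpa using DFunLike.congr_fun hS.eq (toLp p (x, 0))
  rw [h, toLp_snd]

end WithLp

section RCLike

variable {𝕜 E F : Type*} [RCLike 𝕜]
  [NormedAddCommGroup E] [InnerProductSpace 𝕜 E] [CompleteSpace E]
  [NormedAddCommGroup F] [InnerProductSpace 𝕜 F] [CompleteSpace F]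

/-- The self-adjoint dilation of `T : E → F`: the operator matrix `[[0, T†], [T, 0]]` on the
Hilbert sum `E ⊕ F`. -/
noncomputable def selfAdjointDilation (T : E →L[𝕜] F) : WithLp 2 (E × F) →L[𝕜] WithLp 2 (E × F) :=
  (prodContinuousLinearEquiv 2 𝕜 E F).symm ∘L
    (adjoint T ∘L sndL 2 𝕜 E F).prod (T ∘L fstL 2 𝕜 E F)

@[simp]
theorem selfAdjointDilation_apply (T : E →L[𝕜] F) (z : WithLp 2 (E × F)) :
    selfAdjointDilation T z = toLp 2 (adjoint T z.snd, T z.fst) := rfl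

theorem isSelfAdjoint_selfAdjointDilation (T : E →L[𝕜] F) :
    IsSelfAdjoint (selfAdjointDilation T) := by
  rw [isSelfAdjoint_iff_isSymmetric]
  intro z w
  simp [adjoint_inner_left, adjoint_inner_right, add_comm]

theorem norm_selfAdjointDilation_le (T : E →L[𝕜] F) : ‖selfAdjointDilation T‖ ≤ ‖T‖ := by
  refine opNorm_le_bound _ (norm_nonneg T) fun z ↦ ?_
  have h_fst : ‖adjoint T z.snd‖ ≤ ‖T‖ * ‖z.snd‖ := by
    simpa using (adjoint T).le_opNorm z.snd
  have h_snd : ‖T z.fst‖ ≤ ‖T‖ * ‖z.fst‖ := T.le_opNorm z.fst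
  refine le_of_sq_le_sq ?_ (by positivity)
  calc ‖selfAdjointDilation T z‖ ^ 2
      = ‖adjoint T z.snd‖ ^ 2 + ‖T z.fst‖ ^ 2 := prod_norm_sq_eq_of_L2 _
    _ ≤ (‖T‖ * ‖z.snd‖) ^ 2 + (‖T‖ * ‖z.fst‖) ^ 2 := by gcongr
    _ = (‖T‖ * ‖z‖) ^ 2 := by rw [mul_pow _ ‖z‖, prod_norm_sq_eq_of_L2]; ring

theorem commute_selfAdjointDilation_sq_lpProjFst (T : E →L[𝕜] F) :
    Commute (selfAdjointDilation T ^ 2) (lpProjFst 2 𝕜 E F) := by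
  ext z
  simp [sq]

end RCLike

theorem commute_sqrt_one_sub_sq {A : Type*} [CStarAlgebra A] [PartialOrder A] [StarOrderedRing A]
    {a b : A} (h : Commute (a ^ 2) b) : Commute (CFC.sqrt (1 - a ^ 2)) b :=
  ((Commute.one_left b).sub_left h).cfcₙ_nnreal _

section Complex

variable {E F : Type*} [NormedAddCommGroup E] [InnerProductSpace ℂ E] [CompleteSpace E]
  [NormedAddCommGroup F] [InnerProductSpace ℂ F] [CompleteSpace F]

/-- The unitary `B + i √(1 - B²)` of `E ⊕ F` attached to a contraction `T : E → F`, where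
`B = [[0, T†], [T, 0]]`. -/
noncomputable def unitaryDilation (T : E →L[ℂ] F) (hT : ‖T‖ ≤ 1) :
    WithLp 2 (E × F) ≃ₗᵢ[ℂ] WithLp 2 (E × F) :=
  Unitary.linearIsometryEquiv <| selfAdjoint.unitarySelfAddISMul
    ⟨selfAdjointDilation T, isSelfAdjoint_selfAdjointDilation T⟩
    ((norm_selfAdjointDilation_le T).trans hT)

theorem unitaryDilation_apply (T : E →L[ℂ] F) (hT : ‖T‖ ≤ 1) (z : WithLp 2 (E × F)) :
    unitaryDilation T hT z =
      selfAdjointDilation T z +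
        I • (CFC.sqrt (1 - selfAdjointDilation T ^ 2) :
          WithLp 2 (E × F) →L[ℂ] WithLp 2 (E × F)) z := rfl

theorem snd_unitaryDilation_toLp_zero (T : E →L[ℂ] F) (hT : ‖T‖ ≤ 1) (x : E) :
    (unitaryDilation T hT (toLp 2 (x, 0))).snd = T x := by
  simp [unitaryDilation_apply,
    snd_apply_toLp_zero_of_commute
      (commute_sqrt_one_sub_sq (commute_selfAdjointDilation_sq_lpProjFst T))]

theorem stmt3_general (T : E →L[ℂ] F) (hT : ‖T‖ ≤ 1) :
    ∃ (U : WithLp 2 (E × F) ≃ₗᵢ[ℂ] WithLp 2 (F × E)) (γ : E →L[ℂ] E),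
      ∀ x : E, U (toLp 2 (x, 0)) = toLp 2 (T x, γ x) := by
  refine ⟨(unitaryDilation T hT).trans (LinearIsometryEquiv.withLpProdComm 2 ℂ E F),
    fstL 2 ℂ E F ∘L (unitaryDilation T hT : WithLp 2 (E × F) →L[ℂ] WithLp 2 (E × F)) ∘L
      lpInl 2 ℂ E F, fun x ↦ ?_⟩
  rw [← snd_unitaryDilation_toLp_zero T hT x]
  rfl

end Complex

/-- Any nonzero operator `M`, rescaled by its operator norm, can be realized as one
block of a unitary on `H ⊕ H` (with the product inner product): there is a unitary `U`
and a linear map `γ` with `U(α,0) = (‖M‖⁻¹ • M α, γ α)` for all `α`. -/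
theorem stmt3 {H : Type*} [NormedAddCommGroup H] [InnerProductSpace ℂ H]
    [FiniteDimensional ℂ H] [Nontrivial H] (M : H →L[ℂ] H) (hM : M ≠ 0) :
    ∃ (U : WithLp 2 (H × H) ≃ₗᵢ[ℂ] WithLp 2 (H × H)) (γ : H →ₗ[ℂ] H),
      ∀ α : H,
        U ((WithLp.equiv 2 (H × H)).symm (α, 0)) =
          (WithLp.equiv 2 (H × H)).symm (‖M‖⁻¹ • M α, γ α) := by
  have := FiniteDimensional.complete ℂ H
  obtain ⟨U, γ, hU⟩ := stmt3_general (‖M‖⁻¹ • M) (NormedSpace.norm_normalize hM).le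
  exact ⟨U, γ, hU⟩
end

section
/- Let α, v, d, s ∈ ℂ with α ≠ 0, d ≠ 0, and 1 + v ≠ 0, and suppose s² = d² − 1. Set q = d², and define the 2×2 complex matrices X = [[α, 0], [0, α⁻¹]] and Y = I₂ + (v/q)·[[1, s], [s, q−1]]. Then Y is invertible (det Y = 1 + v) and Tr(X Y X⁻¹ Y⁻¹) − 2 = −((q−1)/q²) · (v²/(1+v)) · (α − α⁻¹)². Equivalently, writing β² = 1 + v, this equals −((q−1)/q²)·(β − β⁻¹)²·(α − α⁻¹)². -/
/-!
Let `C = X Y X⁻¹ Y⁻¹`. On the one hand `(C - 1) Y X = X Y - Y X`; on the other, `det C = 1` gives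
`det (C - 1) = 2 - tr C`. Hence `(2 - tr C) det X det Y` is the determinant of the Lie bracket
`⁅X, Y⁆`. For diagonal `X` the bracket has zero diagonal, so only the off-diagonal entries of `Y`
enter. Since `s² = d² - 1`, the matrix `[[1, s], [s, d² - 1]]` is the rank-one matrix
`(1, s)ᵀ (1, s)`, and `det Y` follows from the matrix determinant lemma.
-/

section Matrix

open Matrix

variable {n R K : Type*} [Fintype n] [DecidableEq n] [CommRing R] [Field K]

theorem det_sub_one_fin_two (M : Matrix (Fin 2) (Fin 2) R) :
    (M - 1).det = M.det - M.trace + 1 := by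
  rw [det_fin_two, det_fin_two, trace_fin_two]
  simp only [Matrix.sub_apply, one_apply_eq, one_apply_ne zero_ne_one, one_apply_ne one_ne_zero]
  ring

theorem det_commutator {X Y : Matrix n n R} (hX : IsUnit X.det) (hY : IsUnit Y.det) :
    (X * Y * X⁻¹ * Y⁻¹).det = 1 :=
  calc (X * Y * X⁻¹ * Y⁻¹).det
    _ = (X * X⁻¹).det * (Y * Y⁻¹).det := by simp only [det_mul]; ring
    _ = 1 := by rw [mul_nonsing_inv X hX, mul_nonsing_inv Y hY, det_one, mul_one]

theorem commutator_sub_one_mul {X Y : Matrix n n R} (hX : IsUnit X.det) (hY : IsUnit Y.det) :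
    (X * Y * X⁻¹ * Y⁻¹ - 1) * (Y * X) = ⁅X, Y⁆ := by
  rw [Ring.lie_def, sub_mul, one_mul, ← Matrix.mul_assoc, nonsing_inv_mul_cancel_right _ _ hY,
    nonsing_inv_mul_cancel_right _ _ hX]

theorem det_lie_eq_two_sub_trace_commutator_mul {X Y : Matrix (Fin 2) (Fin 2) R}
    (hX : IsUnit X.det) (hY : IsUnit Y.det) :
    ⁅X, Y⁆.det = (2 - (X * Y * X⁻¹ * Y⁻¹).trace) * (X.det * Y.det) := by
  rw [← commutator_sub_one_mul hX hY, det_mul, det_sub_one_fin_two, det_commutator hX hY, det_mul]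
  ring

theorem lie_diagonal_apply (u : n → R) (Y : Matrix n n R) (i j : n) :
    ⁅diagonal u, Y⁆ i j = (u i - u j) * Y i j := by
  rw [Ring.lie_def, Matrix.sub_apply, diagonal_mul, mul_diagonal]
  ring

theorem det_lie_diagonal_fin_two (u : Fin 2 → R) (Y : Matrix (Fin 2) (Fin 2) R) :
    ⁅diagonal u, Y⁆.det = (u 0 - u 1) ^ 2 * (Y 0 1 * Y 1 0) := by
  simp only [det_fin_two, lie_diagonal_apply]
  ring

theorem trace_commutator_diagonal_sub_two {u : Fin 2 → K} {Y : Matrix (Fin 2) (Fin 2) K}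
    (hu : u 0 * u 1 ≠ 0) (hY : Y.det ≠ 0) :
    (diagonal u * Y * (diagonal u)⁻¹ * Y⁻¹).trace - 2 =
      -((u 0 - u 1) ^ 2 * (Y 0 1 * Y 1 0)) / (u 0 * u 1 * Y.det) := by
  have det_diagonal_u : (diagonal u).det = u 0 * u 1 := by
    rw [det_diagonal, Fin.prod_univ_two]
  have isUnit_det_diagonal_u : IsUnit (diagonal u).det := by
    rw [det_diagonal_u]
    exact hu.isUnit
  rw [eq_div_iff (mul_ne_zero hu hY), ← det_lie_diagonal_fin_two,
    det_lie_eq_two_sub_trace_commutator_mul isUnit_det_diagonal_u hY.isUnit, det_diagonal_u]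
  ring

theorem det_one_add_smul_vecMulVec (c : R) (u v : n → R) :
    (1 + c • vecMulVec u v).det = 1 + c * (v ⬝ᵥ u) := by
  rw [← smul_vecMulVec, vecMulVec_eq Unit, det_one_add_replicateCol_mul_replicateRow,
    dotProduct_smul, smul_eq_mul]

theorem vecMulVec_one_cons_self (s : R) : vecMulVec ![1, s] ![1, s] = !![1, s; s, s ^ 2] := by
  ext i j
  fin_cases i <;> fin_cases j <;> simp [vecMulVec_apply, sq]

end Matrix

theorem stmt6_general {K : Type*} [Field K] (α v d s : K) (hα : α ≠ 0) (hd : d ≠ 0)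
    (hv : 1 + v ≠ 0) (hs : s ^ 2 = d ^ 2 - 1)
    (X Y : Matrix (Fin 2) (Fin 2) K)
    (hX : X = !![α, 0; 0, α⁻¹])
    (hY : Y = 1 + (v / d ^ 2) • !![1, s; s, d ^ 2 - 1]) :
    Y.det = 1 + v ∧
      Matrix.trace (X * Y * X⁻¹ * Y⁻¹) - 2 =
        -((d ^ 2 - 1) / (d ^ 2) ^ 2) * (v ^ 2 / (1 + v)) * (α - α⁻¹) ^ 2 := by
  have det_Y : Y.det = 1 + v := by
    rw [hY, ← hs, ← vecMulVec_one_cons_self, det_one_add_smul_vecMulVec, Matrix.vec2_dotProduct']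
    linear_combination (v / d ^ 2) * hs + div_mul_cancel₀ v (pow_ne_zero 2 hd)
  have Y_offDiag : Y 0 1 * Y 1 0 = (d ^ 2 - 1) / (d ^ 2) ^ 2 * v ^ 2 := by
    have Y_zero_one : Y 0 1 = v / d ^ 2 * s := by simp [hY]
    have Y_one_zero : Y 1 0 = v / d ^ 2 * s := by simp [hY]
    rw [Y_zero_one, Y_one_zero, ← hs]
    ring
  have X_diagonal : X = Matrix.diagonal ![α, α⁻¹] := by
    rw [hX, Matrix.diagonal_fin_two]
    rfl
  refine ⟨det_Y, ?_⟩
  rw [X_diagonal, trace_commutator_diagonal_sub_two (by simp [hα]) (det_Y ▸ hv), Y_offDiag, det_Y]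
  simp only [Matrix.cons_val_zero, Matrix.cons_val_one, mul_inv_cancel₀ hα]
  ring

/-- For `X = diag(α, α⁻¹)` and `Y = I + (v/q)·[[1,s],[s,q−1]]` with `q = d²`,
`s² = q − 1`: `det Y = 1 + v` and
`Tr(XYX⁻¹Y⁻¹) − 2 = −((q−1)/q²)·(v²/(1+v))·(α − α⁻¹)²`. -/
theorem stmt6 (α v d s : ℂ) (hα : α ≠ 0) (hd : d ≠ 0) (hv : 1 + v ≠ 0)
    (hs : s ^ 2 = d ^ 2 - 1)
    (X Y : Matrix (Fin 2) (Fin 2) ℂ)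
    (hX : X = !![α, 0; 0, α⁻¹])
    (hY : Y = 1 + (v / d ^ 2) • !![1, s; s, d ^ 2 - 1]) :
    Y.det = 1 + v ∧
      Matrix.trace (X * Y * X⁻¹ * Y⁻¹) - 2 =
        -((d ^ 2 - 1) / (d ^ 2) ^ 2) * (v ^ 2 / (1 + v)) * (α - α⁻¹) ^ 2 :=
  stmt6_general α v d s hα hd hv hs X Y hX hY
end

section
/- Let G be a subgroup of SL(2,ℂ), let g ∈ GL(2,ℂ), and let H = { g·A·g⁻¹ : A ∈ SL(2,ℝ) } (the conjugate of SL(2,ℝ) inside SL(2,ℂ)). If H is contained in G and H is a normal subgroup of G, then for every f ∈ G the trace Tr(f) is either a real number or a purely imaginary number. -/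
/-!
Elementary matrices `E_ij` with `i ≠ j` are differences of transvections and `1`, so `SL(n, K)`
generates the algebra of all matrices over `K`. Hence, if conjugation by `F ∈ GL(n, L)` carries
`SL(n, K)` into matrices over `K`, it carries every `E_jk` into a matrix over `K`. The entries of
`F * E_jk * F⁻¹` are the products `F i j * F⁻¹ k l`; fixing a nonzero `F⁻¹ k l` shows that
`F = c • P` with `P` a matrix over `K`. Comparing `(tr F) ^ n = c ^ n * (tr P) ^ n` with
`det F = c ^ n * det P` gives `(tr F) ^ n ∈ K` when `det F = 1`. For `n = 2` and `L / K = ℂ / ℝ` the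
trace squares to a real number.
-/

open Matrix

section Adjoin

variable {n R : Type*} [Fintype n] [DecidableEq n] [CommRing R]

theorem single_one_mem_adjoin_specialLinearGroup (i j : n) :
    single i j (1 : R) ∈
      Algebra.adjoin R (Set.range ((↑) : SpecialLinearGroup n R → Matrix n n R)) := by
  set S := Algebra.adjoin R (Set.range ((↑) : SpecialLinearGroup n R → Matrix n n R))
  have off_diagonal {k l : n} (hkl : k ≠ l) : single k l (1 : R) ∈ S := by
    have htransvection : transvection k l (1 : R) ∈ S :=
      Algebra.subset_adjoin ⟨⟨_, det_transvection_of_ne k l hkl 1⟩, rfl⟩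
    simpa only [transvection, add_sub_cancel_left] using sub_mem htransvection (one_mem S)
  rcases ne_or_eq i j with hij | rfl
  · exact off_diagonal hij
  · rcases subsingleton_or_nontrivial n with _ | _
    · have hone : single i i (1 : R) = 1 := by
        ext k l
        rw [Subsingleton.elim k i, Subsingleton.elim l i, single_apply_same, one_apply_eq]
      exact hone ▸ one_mem S
    · obtain ⟨k, hk⟩ := exists_ne i
      simpa only [single_mul_single_same, mul_one] using
        mul_mem (off_diagonal hk.symm) (off_diagonal hk)

variable (n R) in
theorem adjoin_range_coe_specialLinearGroup_eq_top :
    Algebra.adjoin R (Set.range ((↑) : SpecialLinearGroup n R → Matrix n n R)) = ⊤ := by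
  refine eq_top_iff.2 fun A _ => ?_
  rw [matrix_eq_sum_single A]
  refine sum_mem fun i _ => sum_mem fun j _ => ?_
  simpa only [smul_single, smul_eq_mul, mul_one] using
    Subalgebra.smul_mem _ (single_one_mem_adjoin_specialLinearGroup i j) (A i j)

end Adjoin

theorem exists_semiconjBy_of_adjoin_eq_top {R A B : Type*} [CommSemiring R] [Semiring A]
    [Semiring B] [Algebra R A] [Algebra R B] {s : Set A} (hs : Algebra.adjoin R s = ⊤)
    (φ : A →ₐ[R] B) {x : B} (h : ∀ a ∈ s, ∃ b, SemiconjBy x (φ a) (φ b)) (a : A) :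
    ∃ b, SemiconjBy x (φ a) (φ b) := by
  have ha : a ∈ Algebra.adjoin R s := hs ▸ Algebra.mem_top
  induction ha using Algebra.adjoin_induction with
  | mem a ha => exact h a ha
  | algebraMap r =>
    refine ⟨algebraMap R A r, ?_⟩
    rw [φ.commutes]
    exact (Algebra.commutes r x).symm
  | add a₁ a₂ _ _ h₁ h₂ =>
    obtain ⟨⟨b₁, hb₁⟩, b₂, hb₂⟩ := And.intro h₁ h₂
    exact ⟨b₁ + b₂, by simpa only [map_add] using hb₁.add_right hb₂⟩
  | mul a₁ a₂ _ _ h₁ h₂ =>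
    obtain ⟨⟨b₁, hb₁⟩, b₂, hb₂⟩ := And.intro h₁ h₂
    exact ⟨b₁ * b₂, by simpa only [map_mul] using hb₁.mul_right hb₂⟩

theorem mul_single_one_mul_apply {l m n o R : Type*} [Fintype m] [Fintype n] [DecidableEq m]
    [DecidableEq n] [NonAssocSemiring R] (M : Matrix l m R) (N : Matrix n o R) (a : l) (i : m)
    (j : n) (b : o) : (M * single i j (1 : R) * N) a b = M a i * N j b := by
  simp [Matrix.mul_apply, single_apply, ite_and]

theorem exists_eq_smul_map_of_forall_semiconjBy {n K L : Type*} [Fintype n] [DecidableEq n]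
    [CommSemiring K] [Field L] [Algebra K L] {F : GL n L}
    (hF : ∀ A : Matrix n n K, ∃ B : Matrix n n K,
      SemiconjBy F.val (A.map (algebraMap K L)) (B.map (algebraMap K L))) :
    ∃ (c : L) (P : Matrix n n K), F.val = c • P.map (algebraMap K L) := by
  rcases isEmpty_or_nonempty n with _ | _
  · exact ⟨1, 0, Subsingleton.elim _ _⟩
  obtain ⟨k, l, hkl⟩ : ∃ k l, F⁻¹.val k l ≠ 0 := by
    by_contra! hzero
    exact F⁻¹.ne_zero (Matrix.ext hzero)
  have entry_mem (i j : n) : ∃ p : K, F.val i j * F⁻¹.val k l = algebraMap K L p := by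
    obtain ⟨B, hB⟩ := hF (single j k 1)
    have hconj : F.val * single j k 1 * F⁻¹.val = B.map (algebraMap K L) := by
      rw [Units.mul_inv_eq_iff_eq_mul, ← hB.eq, map_single _ _ _ (algebraMap K L), map_one]
    exact ⟨B i l, by rw [← mul_single_one_mul_apply, hconj, map_apply]⟩
  choose P hP using entry_mem
  refine ⟨(F⁻¹.val k l)⁻¹, of P, Matrix.ext fun i j => ?_⟩
  rw [Matrix.smul_apply, map_apply, of_apply, ← hP, smul_eq_mul, mul_comm (F.val i j),
    inv_mul_cancel_left₀ hkl]

theorem exists_trace_pow_card_eq_mul_det_of_eq_smul_map {n K L : Type*} [Fintype n]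
    [DecidableEq n] [Field K] [CommRing L] [Nontrivial L] [Algebra K L] {F : GL n L} {c : L}
    {P : Matrix n n K} (hF : F.val = c • P.map (algebraMap K L)) :
    ∃ t : K, trace F.val ^ Fintype.card n = algebraMap K L t * det F.val := by
  have hdet : det F.val = c ^ Fintype.card n * algebraMap K L P.det := by
    rw [hF, det_smul, RingHom.map_det, RingHom.mapMatrix_apply]
  have htrace : trace F.val = c * algebraMap K L P.trace := by
    rw [hF, trace_smul, smul_eq_mul, AddMonoidHom.map_trace (algebraMap K L)]
  have hP : P.det ≠ 0 := by
    intro hzero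
    refine ((isUnit_iff_isUnit_det F.val).1 F.isUnit).ne_zero ?_
    rw [hdet, hzero, map_zero, mul_zero]
  refine ⟨P.trace ^ Fintype.card n / P.det, ?_⟩
  rw [htrace, hdet, mul_left_comm, ← map_mul, div_mul_cancel₀ _ hP, map_pow, mul_pow]

theorem semiconjBy_units_inv_mul_mul {M : Type*} [Monoid M] (u : Mˣ) {x a b : M}
    (h : SemiconjBy x (↑u * a * ↑u⁻¹) (↑u * b * ↑u⁻¹)) : SemiconjBy (↑u⁻¹ * x * ↑u) a b :=
  ((u.mk_semiconjBy b).units_inv_symm_left.mul_left h).mul_left (u.mk_semiconjBy a)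

section FieldExtension

variable {n K L : Type*} [Fintype n] [DecidableEq n] [Field K] [Field L] [Algebra K L]

theorem exists_trace_pow_card_eq_mul_det_of_semiconjBy_specialLinearGroup {F : GL n L}
    (hF : ∀ A : SpecialLinearGroup n K, ∃ B : Matrix n n K,
      SemiconjBy F.val (A.val.map (algebraMap K L)) (B.map (algebraMap K L))) :
    ∃ t : K, trace F.val ^ Fintype.card n = algebraMap K L t * det F.val := by
  have hF' := exists_semiconjBy_of_adjoin_eq_top (adjoin_range_coe_specialLinearGroup_eq_top n K)
    (Algebra.ofId K L).mapMatrix (Set.forall_mem_range.2 hF)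
  obtain ⟨c, P, hP⟩ := exists_eq_smul_map_of_forall_semiconjBy hF'
  exact exists_trace_pow_card_eq_mul_det_of_eq_smul_map hP

theorem stmt8_general (f : SpecialLinearGroup n L) (g : Matrix n n L) (hg : IsUnit g)
    (H : Set (SpecialLinearGroup n L))
    (hH : H = {M : SpecialLinearGroup n L | ∃ A : Matrix n n K, A.det = 1 ∧
      (M : Matrix n n L) = g * A.map (algebraMap K L) * g⁻¹})
    (hnormal : ∀ h ∈ H, f * h * f⁻¹ ∈ H) :
    ∃ t : K, trace (f : Matrix n n L) ^ Fintype.card n = algebraMap K L t := by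
  lift g to GL n L using hg
  simp only [← coe_units_inv] at hH
  subst hH
  let F : GL n L := g⁻¹ * f * g
  have semiconj (A : SpecialLinearGroup n K) : ∃ B : Matrix n n K,
      SemiconjBy F.val (A.val.map (algebraMap K L)) (B.map (algebraMap K L)) := by
    let h : SpecialLinearGroup n L := ⟨g.val * A.val.map (algebraMap K L) * g⁻¹.val,
      (det_units_conj g _).trans (A.map (algebraMap K L)).2⟩
    obtain ⟨B, -, hB⟩ := hnormal h ⟨A, A.2, rfl⟩
    have hf : SemiconjBy f.val h.val (g.val * B.map (algebraMap K L) * g⁻¹.val) := by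
      rw [← hB]
      exact congrArg Subtype.val (SemiconjBy.conj_mk f h).eq
    exact ⟨B, semiconjBy_units_inv_mul_mul g hf⟩
  obtain ⟨t, ht⟩ := exists_trace_pow_card_eq_mul_det_of_semiconjBy_specialLinearGroup semiconj
  have htrace : trace F.val = trace f.val := trace_units_conj' g f.val
  have hdet : det F.val = 1 := (det_units_conj' g f.val).trans f.2
  exact ⟨t, by rw [← htrace, ht, hdet, mul_one]⟩

end FieldExtension

theorem im_sq_eq_zero_iff {z : ℂ} : (z ^ 2).im = 0 ↔ z.im = 0 ∨ z.re = 0 := by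
  rw [sq, Complex.mul_im, mul_comm z.im, ← two_mul]
  simp [or_comm]

/-- If a conjugate `H = g·SL(2,ℝ)·g⁻¹` is a normal subgroup of a subgroup `G` of
`SL(2,ℂ)`, then the trace of every element of `G` is real or purely imaginary. -/
theorem stmt8 (G : Subgroup (Matrix.SpecialLinearGroup (Fin 2) ℂ))
    (g : Matrix (Fin 2) (Fin 2) ℂ) (hg : IsUnit g)
    (H : Set (Matrix.SpecialLinearGroup (Fin 2) ℂ))
    (hH : H = {M : Matrix.SpecialLinearGroup (Fin 2) ℂ | ∃ A : Matrix (Fin 2) (Fin 2) ℝ, A.det = 1 ∧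
        (M : Matrix (Fin 2) (Fin 2) ℂ) = g * A.map Complex.ofReal * g⁻¹})
    (hHG : H ⊆ (G : Set (Matrix.SpecialLinearGroup (Fin 2) ℂ)))
    (hnormal : ∀ x ∈ G, ∀ h ∈ H, x * h * x⁻¹ ∈ H) :
    ∀ f ∈ G, (Matrix.trace (f : Matrix (Fin 2) (Fin 2) ℂ)).im = 0 ∨
      (Matrix.trace (f : Matrix (Fin 2) (Fin 2) ℂ)).re = 0 := by
  intro f hf
  obtain ⟨t, ht⟩ := stmt8_general f g hg H hH (hnormal f hf)
  exact im_sq_eq_zero_iff.1 (by simpa using congrArg Complex.im ht)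
end

section
/- (Non-unitary Bridge lemma.) Let C be a finite-dimensional complex vector space and let A, B be subspaces with C = A ⊕ B (internal direct sum) and dim B > dim A ≥ 1. Let W be a linear automorphism of C with det W = 1, W(A) ≠ A and W(B) ≠ B. Let G_A be the set of linear automorphisms T of C with det T = 1, T(A) = A, and T(b) = b for all b ∈ B, and let G_B be the set of linear automorphisms T with det T = 1, T(B) = B, and T(a) = a for all a ∈ A. Then the subgroup of the automorphism group of C generated by G_A ∪ G_B ∪ {W} is exactly the group of all linear automorphisms of C of determinant 1. -/
/-!
Call `v` a center of `f` when the group `H` contains every transvection `x ↦ x + t f(x) v`.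
The transvections of `A` and of `B` already lie in the generated group. Because `A` is the smaller
summand, either there is room for a functional `f ≠ 0` killing both `A` and `W(A)`, or a commutator
of transvections of `B` and of `W(B)` helps: both ways some `f ≠ 0` vanishing on `A` has a center
outside `B`. Moving that center by the transvections of `A` shows that all of `ker f` consists of
centers. The functionals with this last property form an invariant subspace of the dual, so they
are all the functionals as soon as the group acts irreducibly, which is what `W(A) ≠ A` and
`W(B) ≠ B` guarantee. Transvections generate the special linear group.
-/

namespace Bridge

open Module Submodule
open LinearEquiv hiding map_smul

variable {K V : Type*} [Field K] [AddCommGroup V] [Module K V]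

lemma mem_ker_det_iff {T : V ≃ₗ[K] V} :
    T ∈ (LinearEquiv.det (R := K) (M := V)).ker ↔ LinearMap.det (T : V →ₗ[K] V) = 1 := by
  rw [MonoidHom.mem_ker, ← Units.val_inj, LinearEquiv.coe_det, Units.val_one]

section Generation

lemma exists_mem_transvections_apply_eq {F : Submodule K V} {x y : V}
    (hxy : LinearIndependent K ![F.mkQ x, F.mkQ y]) :
    ∃ T ∈ transvections K V, T x = y ∧ ∀ z ∈ F, T z = z := by
  obtain ⟨g, hg⟩ := exists_dual_forall_apply_eq_one (linearIndepOn_univ_iff.2 hxy)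
  have hgx : g (F.mkQ x) = 1 := hg 0 trivial
  have hgy : g (F.mkQ y) = 1 := hg 1 trivial
  have hfix : (g ∘ₗ F.mkQ) (y - x) = 0 := by
    rw [map_sub, LinearMap.comp_apply, LinearMap.comp_apply, hgx, hgy, sub_self]
  refine ⟨transvection hfix, mem_transvections hfix, ?_, fun z hz => ?_⟩
  · rw [transvection.apply, LinearMap.comp_apply, hgx, one_smul, add_sub_cancel]
  · rw [transvection.apply, LinearMap.comp_apply, mkQ_apply, (Quotient.mk_eq_zero F).2 hz,
      map_zero, zero_smul, add_zero]

lemma exists_mem_closure_transvections_apply_eq {F : Submodule K V}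
    (hF : 1 < finrank K (V ⧸ F)) {x y : V} (hx : x ∉ F) (hy : y ∉ F) :
    ∃ T ∈ Subgroup.closure (transvections K V), T x = y ∧ ∀ z ∈ F, T z = z := by
  have hx0 : F.mkQ x ≠ 0 := mt (Quotient.mk_eq_zero F).1 hx
  have hy0 : F.mkQ y ≠ 0 := mt (Quotient.mk_eq_zero F).1 hy
  by_cases hxy : LinearIndependent K ![F.mkQ x, F.mkQ y]
  · obtain ⟨T, hT, hTx, hTF⟩ := exists_mem_transvections_apply_eq hxy
    exact ⟨T, Subgroup.subset_closure hT, hTx, hTF⟩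
  obtain ⟨z, hxz⟩ : ∃ z, LinearIndependent K ![F.mkQ x, F.mkQ z] := by
    obtain ⟨z', hz'⟩ := exists_linearIndependent_pair_of_one_lt_finrank hF hx0
    obtain ⟨z, rfl⟩ := F.mkQ_surjective z'
    exact ⟨z, hz'⟩
  have hzy : LinearIndependent K ![F.mkQ z, F.mkQ y] := by
    rw [LinearIndependent.pair_iff' hx0] at hxy hxz
    push Not at hxy
    obtain ⟨c, hc⟩ := hxy
    rw [LinearIndependent.pair_symm_iff, LinearIndependent.pair_iff' hy0]
    intro d hd
    exact hxz (d * c) (by rw [mul_smul, hc, hd])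
  obtain ⟨S, hS, hSx, hSF⟩ := exists_mem_transvections_apply_eq hxz
  obtain ⟨T, hT, hTz, hTF⟩ := exists_mem_transvections_apply_eq hzy
  refine ⟨T * S, mul_mem (Subgroup.subset_closure hT) (Subgroup.subset_closure hS), ?_,
    fun w hw => ?_⟩
  · rw [mul_apply, hSx, hTz]
  · rw [mul_apply, hSF w hw, hTF w hw]

lemma closure_transvections_le_ker_det :
    Subgroup.closure (transvections K V) ≤ (LinearEquiv.det (R := K) (M := V)).ker := by
  rw [Subgroup.closure_le]
  rintro _ ⟨f, v, hfv, rfl⟩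
  exact LinearEquiv.transvection.det_eq_one hfv

variable [FiniteDimensional K V]

lemma mem_transvections_of_finrank_quotient_fixedSubmodule_le_one {T : V ≃ₗ[K] V}
    (hdet : LinearMap.det (T : V →ₗ[K] V) = 1)
    (hT : finrank K (V ⧸ T.fixedSubmodule) ≤ 1) : T ∈ transvections K V := by
  obtain ⟨f, v, hTfv⟩ := mem_dilatransvections_iff_finrank_quotient.2 hT
  have hfv : f v = 0 := by
    rw [hTfv, LinearMap.transvection.det] at hdet
    exact add_eq_left.1 hdet
  exact ⟨f, v, hfv, LinearEquiv.toLinearMap_injective hTfv⟩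

theorem closure_transvections_eq_ker_det :
    Subgroup.closure (transvections K V) = (LinearEquiv.det (R := K) (M := V)).ker := by
  refine le_antisymm closure_transvections_le_ker_det fun T hT => ?_
  induction hF : T.fixedSubmodule using WellFoundedGT.induction
    generalizing T with
  | _ F ih =>
  rcases le_or_gt (finrank K (V ⧸ F)) 1 with hF1 | hF1
  · exact Subgroup.subset_closure (mem_transvections_of_finrank_quotient_fixedSubmodule_le_one
      (mem_ker_det_iff.1 hT) (hF ▸ hF1))
  obtain ⟨x, hx⟩ : ∃ x, x ∉ F := by
    obtain ⟨x, hx⟩ := finrank_pos_iff_exists_ne_zero.1 (zero_lt_one.trans hF1)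
    obtain ⟨x, rfl⟩ := F.mkQ_surjective x
    exact ⟨x, mt (Quotient.mk_eq_zero F).2 hx⟩
  have hTF {z : V} : z ∈ F ↔ T z = z := hF ▸ LinearMap.mem_fixedSubmodule_iff
  have hTx : T x ∉ F := fun h => hx (hTF.2 (T.injective (hTF.1 h)))
  obtain ⟨S, hS, hSx, hSF⟩ := exists_mem_closure_transvections_apply_eq hF1 hTx hx
  have hlt : F < (S * T).fixedSubmodule := by
    refine SetLike.lt_iff_le_and_exists.2 ⟨fun z hz => ?_, x, ?_, hx⟩
    · exact LinearMap.mem_fixedSubmodule_iff.2 (by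
        rw [coe_coe, mul_apply, hTF.1 hz, hSF z hz])
    · exact LinearMap.mem_fixedSubmodule_iff.2 (by rw [coe_coe, mul_apply, hSx])
  have hST := mul_mem (closure_transvections_le_ker_det hS) hT
  exact (Subgroup.mul_mem_cancel_left _ hS).1 (ih _ hlt _ hST rfl)

end Generation

section Centers

/-- The centers of `f` relative to `H`: the vectors `v ∈ ker f` such that `H` contains the whole
root subgroup of transvections `x ↦ x + f x • t • v`. Quantifying over `t` makes this a subspace. -/
def transvectionCenters (H : Subgroup (V ≃ₗ[K] V)) (f : Dual K V) : Submodule K V where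
  carrier := {v | f v = 0 ∧ ∀ t : K, ∃ T ∈ H, ∀ x, T x = x + f x • t • v}
  zero_mem' := ⟨map_zero f, fun t => ⟨1, one_mem H, fun x => by simp⟩⟩
  add_mem' {v w} hv hw := by
    refine ⟨by rw [map_add, hv.1, hw.1, add_zero], fun t => ?_⟩
    obtain ⟨S, hS, hSv⟩ := hv.2 t
    obtain ⟨T, hT, hTw⟩ := hw.2 t
    refine ⟨S * T, mul_mem hS hT, fun x => ?_⟩
    simp only [mul_apply, hSv, hTw, map_add, map_smul, hw.1, smul_zero, add_zero]
    module
  smul_mem' c v hv := by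
    refine ⟨by rw [map_smul, hv.1, smul_zero], fun t => ?_⟩
    obtain ⟨T, hT, hTv⟩ := hv.2 (t * c)
    exact ⟨T, hT, fun x => by rw [hTv, mul_smul]⟩

variable {H : Subgroup (V ≃ₗ[K] V)} {f g : Dual K V} {v w : V}

lemma transvectionCenters_le_ker : transvectionCenters H f ≤ LinearMap.ker f := fun _ hv => hv.1

lemma exists_mem_apply_eq_add_smul (hv : v ∈ transvectionCenters H f) :
    ∃ T ∈ H, ∀ x, T x = x + f x • v := by
  simpa only [one_smul] using hv.2 1

lemma transvectionCenters_le_transvectionCenters_smul (c : K) :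
    transvectionCenters H f ≤ transvectionCenters H (c • f) := by
  refine fun v hv => ⟨by rw [LinearMap.smul_apply, hv.1, smul_zero], fun t => ?_⟩
  obtain ⟨T, hT, hTv⟩ := hv.2 (c * t)
  exact ⟨T, hT, fun x => by rw [hTv, LinearMap.smul_apply]; module⟩

lemma transvectionCenters_zero : transvectionCenters H (0 : Dual K V) = ⊤ :=
  eq_top_iff.2 fun v _ => ⟨rfl, fun t => ⟨1, one_mem H, fun x => by simp⟩⟩

lemma apply_mem_transvectionCenters {h : V ≃ₗ[K] V} (hh : h ∈ H)
    (hv : v ∈ transvectionCenters H (h.dualMap f)) : h v ∈ transvectionCenters H f := by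
  refine ⟨hv.1, fun t => ?_⟩
  obtain ⟨T, hT, hTv⟩ := hv.2 t
  refine ⟨h * T * h⁻¹, mul_mem (mul_mem hh hT) (inv_mem hh), fun x => ?_⟩
  have hx : h (h⁻¹ x) = x := h.apply_symm_apply x
  rw [mul_apply, mul_apply, hTv, map_add, map_smul, map_smul, dualMap_apply, hx]

/-- The commutator of `x ↦ x + f x • v` and `x ↦ x + g x • t • w` is `x ↦ x - f x • g v • t • w`. -/
lemma mem_transvectionCenters_of_apply_ne_zero (hv : v ∈ transvectionCenters H f)
    (hw : w ∈ transvectionCenters H g) (hfw : f w = 0) (hgv : g v ≠ 0) :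
    w ∈ transvectionCenters H f := by
  refine ⟨hfw, fun t => ?_⟩
  obtain ⟨S, hS, hSv⟩ := exists_mem_apply_eq_add_smul hv
  obtain ⟨T, hT, hTw⟩ := hw.2 (-((g v)⁻¹ * t))
  refine ⟨S * T * S⁻¹ * T⁻¹,
    mul_mem (mul_mem (mul_mem hS hT) (inv_mem hS)) (inv_mem hT), fun x => ?_⟩
  have hSinv (y : V) : S⁻¹ y = y - f y • v :=
    S.symm_apply_eq.2 (by rw [hSv, map_sub, map_smul, hv.1]; module)
  have hTinv (y : V) : T⁻¹ y = y + g y • ((g v)⁻¹ * t) • w :=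
    T.symm_apply_eq.2 (by rw [hTw, map_add, map_smul, map_smul, hw.1]; module)
  simp only [mul_apply, hSv, hTw, hSinv, hTinv, map_add, map_sub, map_smul, hv.1, hw.1, hfw]
  match_scalars <;> field_simp <;> ring

end Centers

section SpecialLinearOn

/-- The special linear group of `A`, extended by the identity on `B`: the sets `G_A` and `G_B` of
the theorem are `specialLinearOn A B` and `specialLinearOn B A`. -/
def specialLinearOn (A B : Submodule K V) : Set (V ≃ₗ[K] V) :=
  {S | LinearMap.det (S : V →ₗ[K] V) = 1 ∧ A.map (S : V →ₗ[K] V) = A ∧ ∀ b ∈ B, S b = b}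

/-- `H` contains the transvections of `A`, extended by the identity on `B`. The proof needs
no more than this about `specialLinearOn A B`. -/
def ContainsTransvectionsOn (H : Subgroup (V ≃ₗ[K] V)) (A B : Submodule K V) : Prop :=
  ∀ f ∈ B.dualAnnihilator, A ⊓ LinearMap.ker f ≤ transvectionCenters H f

variable {H : Subgroup (V ≃ₗ[K] V)} {A B : Submodule K V}

lemma transvection_mem_specialLinearOn {f : Dual K V} (hf : f ∈ B.dualAnnihilator) {v : V}
    (hv : v ∈ A) (hfv : f v = 0) : transvection hfv ∈ specialLinearOn A B := by
  have hmem (a : V) (ha : a ∈ A) (c : K) : a + c • v ∈ A := A.add_mem ha (A.smul_mem c hv)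
  refine ⟨mem_ker_det_iff.1 (LinearEquiv.transvection.det_eq_one hfv),
    le_antisymm ?_ fun a ha => ⟨a + -f a • v, hmem a ha _, ?_⟩, fun b hb => ?_⟩
  · exact map_le_iff_le_comap.2 fun a ha => hmem a ha (f a)
  · rw [transvection.apply, (mem_dualAnnihilator f).1 hf b hb, zero_smul, add_zero]
  · change a + -f a • v + f (a + -f a • v) • v = a
    rw [map_add, map_smul, hfv]
    module

lemma containsTransvectionsOn_of_specialLinearOn_subset
    (h : specialLinearOn A B ⊆ (H : Set (V ≃ₗ[K] V))) : ContainsTransvectionsOn H A B := by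
  rintro f hf v ⟨hv, hfv⟩
  refine ⟨hfv, fun t => ?_⟩
  have hftv : f (t • v) = 0 := by rw [map_smul, LinearMap.mem_ker.1 hfv, smul_zero]
  exact ⟨transvection hftv, h (transvection_mem_specialLinearOn hf (A.smul_mem t hv) hftv),
    transvection.apply hftv⟩

lemma ContainsTransvectionsOn.map (hA : ContainsTransvectionsOn H A B) {W : V ≃ₗ[K] V}
    (hW : W ∈ H) :
    ContainsTransvectionsOn H (A.map (W : V →ₗ[K] V)) (B.map (W : V →ₗ[K] V)) := by
  rintro f hf _ ⟨⟨a, ha, rfl⟩, hfa⟩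
  refine apply_mem_transvectionCenters hW (hA (W.dualMap f) ?_ ⟨ha, hfa⟩)
  exact (mem_dualAnnihilator _).2 fun b hb => (mem_dualAnnihilator f).1 hf _ (mem_map_of_mem hb)

end SpecialLinearOn

section Orbits

/-- `U` is stable under the transvections of `A`, extended by the identity on `B`. -/
def IsTransvectionStable (U A B : Submodule K V) : Prop :=
  ∀ f ∈ B.dualAnnihilator, ∀ v ∈ A ⊓ LinearMap.ker f, ∀ x ∈ U, x + f x • v ∈ U

variable {A B U : Submodule K V} {a v : V}

lemma exists_mem_dualAnnihilator_apply_ne_zero (hAB : Disjoint A B) (hv : v ∈ A) (ha : a ∈ A)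
    (hva : a ∉ span K {v}) : ∃ f ∈ B.dualAnnihilator, f v = 0 ∧ f a ≠ 0 := by
  have hav : a ∉ span K {v} ⊔ B := fun h => by
    obtain ⟨y, hy, b, hb, rfl⟩ := mem_sup.1 h
    have hyA : y ∈ A := (span_singleton_le_iff_mem v A).2 hv hy
    have hb0 : b = 0 := disjoint_def.1 hAB b ((A.add_mem_iff_right hyA).1 ha) hb
    exact hva (by rwa [hb0, add_zero])
  obtain ⟨f, hfa, hf⟩ := exists_le_ker_of_notMem hav
  refine ⟨f, (mem_dualAnnihilator f).2 fun b hb => hf (mem_sup_right hb), ?_, hfa⟩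
  exact hf (mem_sup_left (mem_span_singleton_self v))

lemma exists_mem_notMem_span_singleton (hA : 1 < finrank K A) (ha : a ∈ A) (ha0 : a ≠ 0) :
    ∃ v ∈ A, v ≠ 0 ∧ a ∉ span K {v} := by
  obtain ⟨v, hv⟩ := exists_linearIndependent_pair_of_one_lt_finrank hA
    (x := ⟨a, ha⟩) (mt (congrArg Subtype.val) ha0)
  have hv0 : v ≠ 0 := hv.ne_zero 1
  rw [LinearIndependent.pair_symm_iff, LinearIndependent.pair_iff' hv0] at hv
  refine ⟨v, v.2, mt ZeroMemClass.coe_eq_zero.1 hv0, fun h => ?_⟩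
  obtain ⟨c, hc⟩ := mem_span_singleton.1 h
  exact hv c (Subtype.ext hc)

namespace IsTransvectionStable

lemma mem_of_notMem_span (hU : IsTransvectionStable U A B) (hAB : Disjoint A B) {b : V}
    (hv : v ∈ A) (ha : a ∈ A) (hb : b ∈ B) (hab : a + b ∈ U) (hva : a ∉ span K {v}) : v ∈ U := by
  obtain ⟨f, hf, hfv, hfa⟩ := exists_mem_dualAnnihilator_apply_ne_zero hAB hv ha hva
  have h := hU f hf v ⟨hv, hfv⟩ _ hab
  rw [map_add, (mem_dualAnnihilator f).1 hf b hb, add_zero, U.add_mem_iff_right hab] at h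
  exact (U.smul_mem_iff hfa).1 h

lemma le_of_mem (hU : IsTransvectionStable U A B) (hAB : Disjoint A B) (ha : a ∈ A) (haU : a ∈ U)
    (ha0 : a ≠ 0) : A ≤ U := by
  intro v hv
  by_cases hva : v ∈ span K {a}
  · exact (span_singleton_le_iff_mem a U).2 haU hva
  refine hU.mem_of_notMem_span hAB hv ha B.zero_mem (by rwa [add_zero]) fun hav => hva ?_
  obtain ⟨c, rfl⟩ := mem_span_singleton.1 hav
  exact (smul_mem_iff _ (left_ne_zero_of_smul ha0)).1 (mem_span_singleton_self _)

lemma le_or_le (hU : IsTransvectionStable U A B) (hAB : IsCompl A B) (hA : 1 < finrank K A) :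
    A ≤ U ∨ U ≤ B := by
  refine or_iff_not_imp_right.2 fun hUB => ?_
  obtain ⟨x, hxU, hxB⟩ := SetLike.not_le_iff_exists.1 hUB
  obtain ⟨a, b, ha, hb, rfl⟩ := codisjoint_iff_exists_add_eq.1 hAB.codisjoint x
  have ha0 : a ≠ 0 := fun h => hxB (by rwa [h, zero_add])
  obtain ⟨v, hv, hv0, hva⟩ := exists_mem_notMem_span_singleton hA ha ha0
  exact hU.le_of_mem hAB.disjoint hv (hU.mem_of_notMem_span hAB.disjoint hv ha hb hxU hva) hv0

end IsTransvectionStable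

end Orbits

section Irreducible

/-- `H` leaves no subspace of `V` invariant apart from `⊥` and `⊤`. -/
def ActsIrreducibly (H : Subgroup (V ≃ₗ[K] V)) : Prop :=
  ∀ U : Submodule K V, (∀ h ∈ H, ∀ x ∈ U, h x ∈ U) → U = ⊥ ∨ U = ⊤

variable {H : Subgroup (V ≃ₗ[K] V)} {A B U : Submodule K V}

lemma map_eq_of_forall_apply_mem (hU : ∀ h ∈ H, ∀ x ∈ U, h x ∈ U) {W : V ≃ₗ[K] V} (hW : W ∈ H) :
    U.map (W : V →ₗ[K] V) = U :=
  le_antisymm (map_le_iff_le_comap.2 (hU W hW)) fun x hx =>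
    ⟨W⁻¹ x, hU W⁻¹ (inv_mem hW) x hx, W.apply_symm_apply x⟩

lemma IsTransvectionStable.of_forall_apply_mem (hU : ∀ h ∈ H, ∀ x ∈ U, h x ∈ U)
    (hA : ContainsTransvectionsOn H A B) : IsTransvectionStable U A B := by
  intro f hf v hv x hx
  obtain ⟨T, hT, hTv⟩ := exists_mem_apply_eq_add_smul (hA f hf hv)
  exact hTv x ▸ hU T hT x hx

theorem actsIrreducibly_of_containsTransvectionsOn (hAB : IsCompl A B) (hdim : 1 < finrank K B)
    (hA : ContainsTransvectionsOn H A B) (hB : ContainsTransvectionsOn H B A)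
    {W : V ≃ₗ[K] V} (hW : W ∈ H) (hWA : A.map (W : V →ₗ[K] V) ≠ A)
    (hWB : B.map (W : V →ₗ[K] V) ≠ B) : ActsIrreducibly H := by
  intro U hU
  have hUW := map_eq_of_forall_apply_mem hU hW
  have hUA := IsTransvectionStable.of_forall_apply_mem hU hA
  have hUB := IsTransvectionStable.of_forall_apply_mem hU hB
  have hA_le (h : U ⊓ A ≠ ⊥) : A ≤ U := by
    obtain ⟨a, ⟨haU, haA⟩, ha0⟩ := exists_mem_ne_zero_of_ne_bot h
    exact hUA.le_of_mem hAB.disjoint haA haU ha0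
  rcases hUB.le_or_le hAB.symm hdim with hBU | hUleA
  · by_cases hinf : U ⊓ A = ⊥
    · have hBeqU : B = U := eq_of_le_of_inf_le_of_le_sup hBU (hinf.trans_le bot_le)
        (le_top.trans_eq hAB.symm.sup_eq_top.symm)
      exact absurd (hBeqU ▸ hUW) hWB
    · exact Or.inr (eq_top_iff.2 (hAB.sup_eq_top.ge.trans (sup_le (hA_le hinf) hBU)))
  · refine Or.inl (by_contra fun hU0 => ?_)
    have hAeqU : A = U := le_antisymm (hA_le (by rwa [inf_eq_left.2 hUleA])) hUleA
    exact hWA (hAeqU ▸ hUW)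

end Irreducible

section FullAxes

variable {H : Subgroup (V ≃ₗ[K] V)} {f g : Dual K V}

lemma ker_le_transvectionCenters_smul (hf : LinearMap.ker f ≤ transvectionCenters H f) (c : K) :
    LinearMap.ker (c • f) ≤ transvectionCenters H (c • f) := by
  rcases eq_or_ne c 0 with rfl | hc
  · rw [zero_smul, transvectionCenters_zero]
    exact le_top
  · rw [LinearMap.ker_smul f c hc]
    exact hf.trans (transvectionCenters_le_transvectionCenters_smul c)

lemma ker_le_transvectionCenters_dualMap (hf : LinearMap.ker f ≤ transvectionCenters H f)
    {h : V ≃ₗ[K] V} (hh : h ∈ H) :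
    LinearMap.ker (h.dualMap f) ≤ transvectionCenters H (h.dualMap f) := by
  intro x hx
  have hfx : h x ∈ transvectionCenters H ((h⁻¹).dualMap (h.dualMap f)) := by
    have hdual : (h⁻¹).dualMap (h.dualMap f) = f :=
      LinearMap.ext fun y => congrArg f (h.apply_symm_apply y)
    rw [hdual]
    exact hf hx
  exact h.symm_apply_apply x ▸ apply_mem_transvectionCenters (inv_mem hh) hfx

lemma ker_le_transvectionCenters_add (hf : LinearMap.ker f ≤ transvectionCenters H f)
    (hg : LinearMap.ker g ≤ transvectionCenters H g) :
    LinearMap.ker (f + g) ≤ transvectionCenters H (f + g) := by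
  by_cases hgf : LinearMap.ker g ≤ LinearMap.ker f
  · have hfg : f ∈ span K (Set.range fun _ : Unit => g) :=
      mem_span_of_iInf_ker_le_ker (by rwa [iInf_const])
    rw [Set.range_const] at hfg
    obtain ⟨c, rfl⟩ := mem_span_singleton.1 hfg
    have hcg : c • g + g = (c + 1) • g := by rw [add_smul, one_smul]
    exact hcg ▸ ker_le_transvectionCenters_smul hg (c + 1)
  · obtain ⟨v, hgv, hfv⟩ := SetLike.not_le_iff_exists.1 hgf
    obtain ⟨T, hT, hTv⟩ :=
      exists_mem_apply_eq_add_smul ((transvectionCenters H g).smul_mem (f v)⁻¹ (hg hgv))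
    have hTf : T.dualMap f = f + g := by
      ext x
      rw [dualMap_apply, hTv, map_add, map_smul, map_smul, smul_eq_mul, smul_eq_mul,
        inv_mul_cancel₀ hfv, mul_one, LinearMap.add_apply]
    exact hTf ▸ ker_le_transvectionCenters_dualMap hf hT

/-- The functionals `f` for which `H` contains every transvection `x ↦ x + f x • v`. -/
def fullAxes (H : Subgroup (V ≃ₗ[K] V)) : Submodule K (Dual K V) where
  carrier := {f | LinearMap.ker f ≤ transvectionCenters H f}
  zero_mem' := by
    rw [Set.mem_ofPred_eq, transvectionCenters_zero]
    exact le_top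
  add_mem' := ker_le_transvectionCenters_add
  smul_mem' c _ hf := ker_le_transvectionCenters_smul hf c

lemma ActsIrreducibly.fullAxes_eq_top [FiniteDimensional K V] (hH : ActsIrreducibly H)
    (h : fullAxes H ≠ ⊥) : fullAxes H = ⊤ := by
  have hann : (fullAxes H).dualCoannihilator.dualAnnihilator = fullAxes H :=
    Subspace.dualCoannihilator_dualAnnihilator_eq
  have hstable (T : V ≃ₗ[K] V) (hT : T ∈ H) (x : V) (hx : x ∈ (fullAxes H).dualCoannihilator) :
      T x ∈ (fullAxes H).dualCoannihilator := by
    rw [mem_dualCoannihilator] at hx ⊢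
    exact fun f hf => hx (T.dualMap f) (ker_le_transvectionCenters_dualMap hf hT)
  rcases hH _ hstable with hbot | htop
  · rw [← hann, hbot, dualAnnihilator_bot]
  · exact absurd (by rw [← hann, htop, dualAnnihilator_top]) h

lemma transvections_subset_of_fullAxes_eq_top (h : fullAxes H = ⊤) :
    transvections K V ⊆ (H : Set (V ≃ₗ[K] V)) := by
  rintro _ ⟨f, v, hfv, rfl⟩
  have hf : f ∈ fullAxes H := h ▸ mem_top
  obtain ⟨T, hT, hTv⟩ := exists_mem_apply_eq_add_smul (hf hfv)
  convert! hT
  exact LinearEquiv.ext fun x => (hTv x).symm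

end FullAxes

section BridgeCenter

variable {H : Subgroup (V ≃ₗ[K] V)} {A B A' B' : Submodule K V}

lemma mem_fullAxes_of_mem_transvectionCenters (hAB : IsCompl A B)
    (hA : ContainsTransvectionsOn H A B) (hB : ContainsTransvectionsOn H B A) {f : Dual K V}
    (hf : f ∈ A.dualAnnihilator) {w : V} (hw : w ∈ transvectionCenters H f) (hwB : w ∉ B) :
    f ∈ fullAxes H := by
  have hfA := (mem_dualAnnihilator f).1 hf
  have hstable : IsTransvectionStable (transvectionCenters H f) A B := by
    intro g hg v hv x hx
    obtain ⟨T, hT, hTv⟩ := exists_mem_apply_eq_add_smul (hA g hg hv)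
    have hTf : T.dualMap f = f := by
      ext y
      rw [dualMap_apply, hTv, map_add, map_smul, hfA v hv.1, smul_zero, add_zero]
    exact hTv x ▸ apply_mem_transvectionCenters hT (hTf.symm ▸ hx)
  have hB_center (b : V) (hb : b ∈ B) (hfb : f b = 0) : b ∈ transvectionCenters H f :=
    hB f hf ⟨hb, hfb⟩
  have hA_center : A ≤ transvectionCenters H f := by
    obtain ⟨a, b, ha, hb, rfl⟩ := codisjoint_iff_exists_add_eq.1 hAB.codisjoint w
    have hfb : f b = 0 := by simpa [hfA a ha] using transvectionCenters_le_ker hw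
    have haf := ((transvectionCenters H f).add_mem_iff_left (hB_center b hb hfb)).1 hw
    exact hstable.le_of_mem hAB.disjoint ha haf fun h => hwB (by rwa [h, zero_add])
  intro x hx
  obtain ⟨a, b, ha, hb, rfl⟩ := codisjoint_iff_exists_add_eq.1 hAB.codisjoint x
  exact add_mem (hA_center ha) (hB_center b hb (by simpa [hfA a ha] using hx))

lemma exists_mem_dualAnnihilator_ne_zero_le_ker {U : Submodule K V}
    (h : finrank K ↥(A ⊔ U) < finrank K V) :
    ∃ f ∈ A.dualAnnihilator, f ≠ 0 ∧ U ≤ LinearMap.ker f := by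
  obtain ⟨f, hf0, hf⟩ := exists_le_ker_of_lt_top _ (lt_top_of_finrank_lt_finrank h)
  exact ⟨f, (mem_dualAnnihilator f).2 (le_sup_left.trans hf), hf0, le_sup_right.trans hf⟩

variable [FiniteDimensional K V]

lemma finrank_sup_span_singleton_le (U : Submodule K V) (v : V) :
    finrank K ↥(U ⊔ span K {v}) ≤ finrank K U + 1 :=
  (finrank_add_le_finrank_add_finrank U _).trans
    (Nat.add_le_add_left ((finrank_span_le_card {v}).trans_eq (by simp)) _)

lemma exists_mem_dualAnnihilator_mem_transvectionCenters (hAB : IsCompl A B)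
    (hdim : finrank K A < finrank K B) (hA' : finrank K A' ≤ finrank K A)
    (hB : ContainsTransvectionsOn H B A) (hB' : ContainsTransvectionsOn H B' A') {w : V}
    (hwB' : w ∈ B') (hwB : w ∉ B) :
    ∃ f ∈ A.dualAnnihilator, f ≠ 0 ∧ w ∈ transvectionCenters H f := by
  obtain ⟨a, b, ha, hb, rfl⟩ := codisjoint_iff_exists_add_eq.1 hAB.codisjoint w
  have ha0 : a ≠ 0 := fun h => hwB (by rwa [h, zero_add])
  have hV : finrank K A + finrank K B = finrank K V := finrank_add_eq_of_isCompl hAB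
  have hA1 : 1 ≤ finrank K A := one_le_finrank_iff.2 (A.ne_bot_iff.2 ⟨a, ha, ha0⟩)
  set D := A' ⊔ span K {a + b}
  have hwD : a + b ∈ D := mem_sup_right (mem_span_singleton_self _)
  have hD : finrank K D ≤ finrank K A' + 1 := finrank_sup_span_singleton_le A' (a + b)
  have hD_center {g : Dual K V} (hg : D ≤ LinearMap.ker g) : a + b ∈ transvectionCenters H g :=
    hB' g ((mem_dualAnnihilator g).2 (le_sup_left.trans hg)) ⟨hwB', hg hwD⟩
  by_cases hbD : b ∈ D
  · have haD : a ∈ D := (D.add_mem_iff_left hbD).1 hwD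
    have hinf : 1 ≤ finrank K ↥(A ⊓ D) :=
      one_le_finrank_iff.2 ((A ⊓ D).ne_bot_iff.2 ⟨a, ⟨ha, haD⟩, ha0⟩)
    have hsum := finrank_sup_add_finrank_inf_eq A D
    obtain ⟨f, hfA, hf0, hfD⟩ :=
      exists_mem_dualAnnihilator_ne_zero_le_ker (A := A) (U := D) (by omega)
    exact ⟨f, hfA, hf0, hD_center hfD⟩
  · have hAb := finrank_sup_span_singleton_le A b
    obtain ⟨f, hfA, hf0, hfb⟩ :=
      exists_mem_dualAnnihilator_ne_zero_le_ker (A := A) (U := span K {b}) (by omega)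
    obtain ⟨g, hgb, hgD⟩ := exists_le_ker_of_notMem hbD
    replace hfb : f b = 0 := hfb (mem_span_singleton_self b)
    have hfw : f (a + b) = 0 := by rw [map_add, (mem_dualAnnihilator f).1 hfA a ha, hfb, add_zero]
    exact ⟨f, hfA, hf0, mem_transvectionCenters_of_apply_ne_zero (hB f hfA ⟨hb, hfb⟩)
      (hD_center hgD) hfw hgb⟩

lemma fullAxes_ne_bot (hAB : IsCompl A B) (hdim : finrank K A < finrank K B)
    (hA : ContainsTransvectionsOn H A B) (hB : ContainsTransvectionsOn H B A)
    {W : V ≃ₗ[K] V} (hW : W ∈ H) (hWB : B.map (W : V →ₗ[K] V) ≠ B) : fullAxes H ≠ ⊥ := by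
  obtain ⟨w, hwW, hwB⟩ : ∃ w ∈ B.map (W : V →ₗ[K] V), w ∉ B :=
    SetLike.not_le_iff_exists.1 fun h => hWB (eq_of_le_of_finrank_eq h (W.finrank_map_eq B))
  obtain ⟨f, hfA, hf0, hw⟩ := exists_mem_dualAnnihilator_mem_transvectionCenters hAB hdim
    (W.finrank_map_eq A).le hB (hB.map hW) hwW hwB
  have hf := mem_fullAxes_of_mem_transvectionCenters hAB hA hB hfA hw hwB
  exact (fullAxes H).ne_bot_iff.2 ⟨f, hf, hf0⟩

end BridgeCenter

end Bridge

theorem stmt10_general {K V : Type*} [Field K] [AddCommGroup V] [Module K V]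
    [FiniteDimensional K V] (A B : Submodule K V) (hAB : IsCompl A B)
    (hdim : Module.finrank K A < Module.finrank K B) (W : V ≃ₗ[K] V)
    (hWdet : LinearMap.det (W : V →ₗ[K] V) = 1)
    (hWA : A.map (W : V →ₗ[K] V) ≠ A) (hWB : B.map (W : V →ₗ[K] V) ≠ B) :
    Subgroup.closure (Bridge.specialLinearOn A B ∪ Bridge.specialLinearOn B A ∪ {W}) =
      (LinearEquiv.det (R := K) (M := V)).ker := by
  refine le_antisymm ((Subgroup.closure_le _).2 ?_) ?_
  · rintro T ((hT | hT) | rfl)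
    · exact Bridge.mem_ker_det_iff.2 hT.1
    · exact Bridge.mem_ker_det_iff.2 hT.1
    · exact Bridge.mem_ker_det_iff.2 hWdet
  set H := Subgroup.closure (Bridge.specialLinearOn A B ∪ Bridge.specialLinearOn B A ∪ {W})
  have hsub : Bridge.specialLinearOn A B ∪ Bridge.specialLinearOn B A ∪ {W} ⊆ (H : Set _) :=
    Subgroup.subset_closure
  rw [Set.union_subset_iff, Set.union_subset_iff, Set.singleton_subset_iff] at hsub
  obtain ⟨⟨hSA, hSB⟩, hW⟩ := hsub
  have hA := Bridge.containsTransvectionsOn_of_specialLinearOn_subset hSA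
  have hB := Bridge.containsTransvectionsOn_of_specialLinearOn_subset hSB
  have hA0 : A ≠ ⊥ := fun h => hWA (by rw [h, Submodule.map_bot])
  have hB1 : 1 < Module.finrank K B := (Submodule.one_le_finrank_iff.2 hA0).trans_lt hdim
  have hirr := Bridge.actsIrreducibly_of_containsTransvectionsOn hAB hB1 hA hB hW hWA hWB
  have haxes := hirr.fullAxes_eq_top (Bridge.fullAxes_ne_bot hAB hdim hA hB hW hWB)
  rw [← Bridge.closure_transvections_eq_ker_det, Subgroup.closure_le]
  exact Bridge.transvections_subset_of_fullAxes_eq_top haxes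

/-- Non-unitary Bridge lemma: for `C = A ⊕ B` with `dim B > dim A ≥ 1` and a
determinant-one bridge `W` (with `W(A) ≠ A`, `W(B) ≠ B`), the subgroup generated by
the determinant-one automorphisms supported on `A`, those supported on `B`, and `W`
is exactly the group of all determinant-one automorphisms of `C`. -/
theorem stmt10 {C : Type*} [AddCommGroup C] [Module ℂ C] [FiniteDimensional ℂ C]
    (A B : Submodule ℂ C) (hAB : IsCompl A B)
    (hdim : Module.finrank ℂ A < Module.finrank ℂ B) (hA : 1 ≤ Module.finrank ℂ A)
    (W : C ≃ₗ[ℂ] C) (hWdet : LinearMap.det (W : C →ₗ[ℂ] C) = 1)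
    (hWA : A.map (W : C →ₗ[ℂ] C) ≠ A) (hWB : B.map (W : C →ₗ[ℂ] C) ≠ B) :
    ∀ T : C ≃ₗ[ℂ] C,
      T ∈ Subgroup.closure
          ({S : C ≃ₗ[ℂ] C | LinearMap.det (S : C →ₗ[ℂ] C) = 1 ∧
              A.map (S : C →ₗ[ℂ] C) = A ∧ ∀ b ∈ B, S b = b} ∪
            {S : C ≃ₗ[ℂ] C | LinearMap.det (S : C →ₗ[ℂ] C) = 1 ∧
              B.map (S : C →ₗ[ℂ] C) = B ∧ ∀ a ∈ A, S a = a} ∪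
            {W}) ↔
        LinearMap.det (T : C →ₗ[ℂ] C) = 1 :=
  fun T => (SetLike.ext_iff.1 (stmt10_general A B hAB hdim W hWdet hWA hWB) T).trans
    Bridge.mem_ker_det_iff
end

section
/- Let C be a finite-dimensional complex vector space and let A, B be subspaces with C = A ⊕ B (internal direct sum) and dim B > dim A ≥ 1. Let W be a linear automorphism of C with det W = 1, W(A) ≠ A and W(B) ≠ B. Let G_A be the set of linear automorphisms T of C with det T = 1, T(A) = A, and T(b) = b for all b ∈ B; let G_B be the set of linear automorphisms T with det T = 1, T(B) = B, and T(a) = a for all a ∈ A. Then the subgroup Γ generated by G_A ∪ G_B ∪ {W} acts transitively on C \ {0}: for all nonzero vectors ψ, φ ∈ C there exists T ∈ Γ with T(ψ) = φ. -/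
/-!
Transvections show that `G_B` is transitive on the nonzero vectors of `B`, as `dim B ≥ 2`, and that
`G_A` carries any nonzero vector of `A` to a nonzero multiple of any other one, whatever `dim A` is.
Transitivity up to scalars is all that is needed on `A`, so the line case `dim A = 1` requires no
separate treatment.

Since `W B` lies neither in `A` (its dimension is too large) nor in `B`, and a group is not the
union of two proper subgroups, `W B` contains a vector `W b₀ = a₀ + b₁` with both components
nonzero. Moving the `A`-component of `x ∉ A`, if it is nonzero, to some `c a₀` and then its
`B`-component to `c b₁` turns `x` into `W (c b₀)`, which `W⁻¹` brings into `B`. A nonzero `x ∈ A` is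
first moved off `A`: it goes to a multiple of some `u ∈ A` with `W u ∉ A`, and `W` follows. So every
nonzero vector shares its orbit with a nonzero vector of `B`, and these form a single orbit.
-/

theorem not_map_le_of_map_ne {K V : Type*} [DivisionRing K] [AddCommGroup V] [Module K V]
    [FiniteDimensional K V] {U : Submodule K V} {W : V ≃ₗ[K] V}
    (h : U.map (W : V →ₗ[K] V) ≠ U) : ¬ U.map (W : V →ₗ[K] V) ≤ U := fun hle ↦
  h (Submodule.eq_of_le_of_finrank_eq hle (LinearEquiv.finrank_map_eq W U))

theorem exists_apply_eq_add_of_not_map_le {R M V : Type*} [Ring R] [AddCommGroup M] [Module R M]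
    [AddCommGroup V] [Module R V] {A B : Submodule R V} (hAB : IsCompl A B) {f : M →ₗ[R] V}
    {N : Submodule R M} (hA : ¬ N.map f ≤ A) (hB : ¬ N.map f ≤ B) :
    ∃ (n : N) (a : A) (b : B), n ≠ 0 ∧ a ≠ 0 ∧ b ≠ 0 ∧ f n = a + b := by
  have hunion : ¬ (N.map f : Set V) ⊆ A ∪ B := by
    rw [AddSubgroupClass.subset_union, not_or]
    exact ⟨hA, hB⟩
  obtain ⟨_, ⟨n, hn, rfl⟩, hfn⟩ := Set.not_subset.1 hunion
  obtain ⟨a, b, hab, -⟩ := Submodule.existsUnique_add_of_isCompl hAB (f n)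
  refine ⟨⟨n, hn⟩, a, b, ?_, ?_, ?_, hab.symm⟩
  · intro h
    exact hfn (Or.inl (by simp [(Submodule.mk_eq_zero N hn).1 h]))
  · rintro rfl
    exact hfn (Or.inr (by simp [← hab]))
  · rintro rfl
    exact hfn (Or.inl (by simp [← hab]))

section CommRing

variable {R V : Type*} [CommRing R] [AddCommGroup V] [Module R V]

/-- The special linear group of the block `U`: the automorphisms of determinant one which preserve
`U` and fix `F` pointwise. When `V = A ⊕ B`, the groups `G_A` and `G_B` are
`blockSpecialLinear A B` and `blockSpecialLinear B A`. The definition is meant for finite free `V`: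
`LinearMap.det` takes the value `1` on every map when `V` has no finite basis. -/
def blockSpecialLinear (U F : Submodule R V) : Subgroup (V ≃ₗ[R] V) where
  carrier := {S | LinearMap.det (S : V →ₗ[R] V) = 1 ∧ U.map (S : V →ₗ[R] V) = U ∧
    ∀ x ∈ F, S x = x}
  one_mem' := ⟨LinearMap.det_id, Submodule.map_id U, fun _ _ ↦ rfl⟩
  mul_mem' := by
    rintro S T ⟨hS, hSU, hSF⟩ ⟨hT, hTU, hTF⟩
    refine ⟨?_, ?_, fun x hx ↦ ?_⟩
    · rw [LinearEquiv.mul_eq_trans, LinearEquiv.coe_trans, LinearMap.det_comp, hS, hT, one_mul]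
    · rw [LinearEquiv.mul_eq_trans, LinearEquiv.coe_trans, Submodule.map_comp, hTU, hSU]
    · rw [LinearEquiv.mul_apply, hTF x hx, hSF x hx]
  inv_mem' := by
    rintro S ⟨hS, hSU, hSF⟩
    refine ⟨?_, (Submodule.map_symm_eq_iff S).2 hSU, fun x hx ↦ S.symm_apply_eq.2 (hSF x hx).symm⟩
    have h := S.det_symm_mul_det
    rwa [hS, mul_one] at h

theorem transvection_mem_blockSpecialLinear {U F : Submodule R V} {f : Module.Dual R V} {u : V}
    (hu : u ∈ U) (hfF : F ≤ LinearMap.ker f) (hfu : f u = 0) :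
    LinearEquiv.transvection hfu ∈ blockSpecialLinear U F := by
  refine ⟨?_, le_antisymm ?_ fun x hx ↦ ?_, fun x hx ↦ ?_⟩
  · rw [← LinearEquiv.coe_det, LinearEquiv.transvection.det_eq_one, Units.val_one]
  · rintro _ ⟨x, hx, rfl⟩
    exact U.add_mem hx (U.smul_mem _ hu)
  · refine ⟨x - f x • u, U.sub_mem hx (U.smul_mem _ hu), ?_⟩
    simp [LinearMap.transvection.apply, hfu]
  · rw [LinearEquiv.transvection.apply, LinearMap.mem_ker.1 (hfF hx), zero_smul, add_zero]

end CommRing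

section Field

variable {K V : Type*} [Field K] [AddCommGroup V] [Module K V] {U F : Submodule K V}

theorem exists_mem_blockSpecialLinear_apply_eq_of_linearIndependent (h : IsCompl U F) {v w : U}
    (hvw : LinearIndependent K ![v, w]) : ∃ S ∈ blockSpecialLinear U F, S v = w := by
  obtain ⟨g, hg⟩ := Module.exists_dual_forall_apply_eq_one (linearIndepOn_univ_iff.2 hvw)
  have hgv : g v = 1 := hg 0 trivial
  have hgw : g w = 1 := hg 1 trivial
  let f : Module.Dual K V := g ∘ₗ U.projectionOnto F h
  have hfF : F ≤ LinearMap.ker f := fun x hx ↦ by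
    simp [f, Submodule.projectionOnto_apply_of_mem_right h hx]
  have hf : f (w - v : U) = 0 := by simp [f, hgv, hgw]
  refine ⟨_, transvection_mem_blockSpecialLinear (w - v).2 hfF hf, ?_⟩
  simp [LinearMap.transvection.apply, f, hgv]

theorem exists_mem_blockSpecialLinear_apply_eq_smul (h : IsCompl U F) {v w : U} (hv : v ≠ 0)
    (hw : w ≠ 0) : ∃ c : K, c ≠ 0 ∧ ∃ S ∈ blockSpecialLinear U F, S v = c • (w : V) := by
  by_cases hvw : LinearIndependent K ![w, v]
  · obtain ⟨S, hS, hSv⟩ := exists_mem_blockSpecialLinear_apply_eq_of_linearIndependent h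
      (LinearIndependent.pair_symm_iff.1 hvw)
    exact ⟨1, one_ne_zero, S, hS, by rw [hSv, one_smul]⟩
  · rw [LinearIndependent.pair_iff' hw] at hvw
    push Not at hvw
    obtain ⟨c, rfl⟩ := hvw
    exact ⟨c, left_ne_zero_of_smul hv, 1, one_mem _, rfl⟩

theorem exists_mem_blockSpecialLinear_apply_eq (h : IsCompl U F) (hU : 1 < Module.finrank K U)
    {v w : U} (hv : v ≠ 0) (hw : w ≠ 0) : ∃ S ∈ blockSpecialLinear U F, S v = w := by
  obtain ⟨c, hc, S, hS, hSv⟩ := exists_mem_blockSpecialLinear_apply_eq_smul h hv hw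
  obtain ⟨u, hwu⟩ := exists_linearIndependent_pair_of_one_lt_finrank hU hw
  have hcwu : LinearIndependent K ![c • w, u] := by
    simpa using (LinearIndependent.pair_smul_smul_iff hc.isUnit isUnit_one).2 hwu
  obtain ⟨T, hT, hTw⟩ := exists_mem_blockSpecialLinear_apply_eq_of_linearIndependent h hcwu
  obtain ⟨T', hT', hTu⟩ := exists_mem_blockSpecialLinear_apply_eq_of_linearIndependent h
    (LinearIndependent.pair_symm_iff.1 hwu)
  refine ⟨T' * (T * S), mul_mem hT' (mul_mem hT hS), ?_⟩
  rw [LinearEquiv.mul_apply, LinearEquiv.mul_apply, hSv, ← Submodule.coe_smul, hTw, hTu]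

end Field

section Orbit

open MulAction

theorem orbit_apply_eq_of_mem {R V : Type*} [Semiring R] [AddCommMonoid V] [Module R V]
    {H : Subgroup (V ≃ₗ[R] V)} {S : V ≃ₗ[R] V} (hS : S ∈ H) (x : V) :
    orbit H (S x) = orbit H x :=
  orbit_smul (⟨S, hS⟩ : H) x

variable {K V : Type*} [Field K] [AddCommGroup V] [Module K V] {A B U F : Submodule K V}
  {H : Subgroup (V ≃ₗ[K] V)} {W : V ≃ₗ[K] V}

theorem orbit_add_eq_of_blockSpecialLinear_le (h : IsCompl U F) (hH : blockSpecialLinear U F ≤ H)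
    (hU : 1 < Module.finrank K U) {v w : U} (hv : v ≠ 0) (hw : w ≠ 0) (y : F) :
    orbit H (v + y : V) = orbit H (w + y : V) := by
  obtain ⟨S, hS, hSv⟩ := exists_mem_blockSpecialLinear_apply_eq h hU hv hw
  rw [← orbit_apply_eq_of_mem (hH hS), map_add, hSv, hS.2.2 y y.2]

theorem exists_orbit_add_eq_smul_of_blockSpecialLinear_le (h : IsCompl U F)
    (hH : blockSpecialLinear U F ≤ H) {v w : U} (hv : v ≠ 0) (hw : w ≠ 0) (y : F) :
    ∃ c : K, c ≠ 0 ∧ orbit H (v + y : V) = orbit H (c • w + y : V) := by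
  obtain ⟨c, hc, S, hS, hSv⟩ := exists_mem_blockSpecialLinear_apply_eq_smul h hv hw
  refine ⟨c, hc, ?_⟩
  rw [← orbit_apply_eq_of_mem (hH hS), map_add, hSv, hS.2.2 y y.2]

theorem exists_notMem_orbit_eq_of_mem (hAB : IsCompl A B) (hHA : blockSpecialLinear A B ≤ H)
    (hHW : W ∈ H) (hWA : ¬ A.map (W : V →ₗ[K] V) ≤ A) {a : A} (ha : a ≠ 0) :
    ∃ y ∉ A, orbit H (a : V) = orbit H y := by
  obtain ⟨_, ⟨u, hu, rfl⟩, hWu⟩ := SetLike.not_le_iff_exists.1 hWA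
  have hu0 : (⟨u, hu⟩ : A) ≠ 0 := by
    intro h
    exact hWu (by simp [(Submodule.mk_eq_zero A hu).1 h])
  obtain ⟨c, hc, h⟩ := exists_orbit_add_eq_smul_of_blockSpecialLinear_le hAB hHA ha hu0 0
  refine ⟨W (c • u), ?_, ?_⟩
  · rwa [map_smul, A.smul_mem_iff hc]
  · rw [orbit_apply_eq_of_mem hHW]
    simpa only [ZeroMemClass.coe_zero, add_zero] using h

theorem exists_mem_orbit_eq_of_notMem (hAB : IsCompl A B) (hB : 1 < Module.finrank K B)
    (hHA : blockSpecialLinear A B ≤ H) (hHB : blockSpecialLinear B A ≤ H) (hHW : W ∈ H)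
    (hWBA : ¬ B.map (W : V →ₗ[K] V) ≤ A) (hWB : ¬ B.map (W : V →ₗ[K] V) ≤ B) {x : V}
    (hx : x ∉ A) : ∃ b : B, b ≠ 0 ∧ orbit H x = orbit H (b : V) := by
  obtain ⟨a, b, rfl, -⟩ := Submodule.existsUnique_add_of_isCompl hAB x
  have hb : b ≠ 0 := by
    rintro rfl
    exact hx (by simp)
  rcases eq_or_ne a 0 with rfl | ha
  · exact ⟨b, hb, by rw [ZeroMemClass.coe_zero, zero_add]⟩
  obtain ⟨b₀, a₀, b₁, hb₀, ha₀, hb₁, hWb₀⟩ := exists_apply_eq_add_of_not_map_le hAB hWBA hWB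
  rw [LinearEquiv.coe_coe] at hWb₀
  obtain ⟨c, hc, hac⟩ := exists_orbit_add_eq_smul_of_blockSpecialLinear_le hAB hHA ha ha₀ b
  refine ⟨c • b₀, smul_ne_zero hc hb₀, ?_⟩
  calc orbit H (a + b : V)
      = orbit H (c • a₀ + b : V) := hac
    _ = orbit H (c • a₀ + c • b₁ : V) := by
        simpa only [add_comm, Submodule.coe_smul] using
          orbit_add_eq_of_blockSpecialLinear_le hAB.symm hHB hB hb (smul_ne_zero hc hb₁) (c • a₀)
    _ = orbit H (W (c • b₀)) := by rw [map_smul, hWb₀, smul_add]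
    _ = orbit H (c • b₀ : V) := orbit_apply_eq_of_mem hHW _

theorem orbit_eq_orbit_of_ne_zero (hAB : IsCompl A B) (hB : 1 < Module.finrank K B)
    (hHA : blockSpecialLinear A B ≤ H) (hHB : blockSpecialLinear B A ≤ H) (hHW : W ∈ H)
    (hWA : ¬ A.map (W : V →ₗ[K] V) ≤ A) (hWBA : ¬ B.map (W : V →ₗ[K] V) ≤ A)
    (hWB : ¬ B.map (W : V →ₗ[K] V) ≤ B) {x y : V} (hx : x ≠ 0) (hy : y ≠ 0) :
    orbit H x = orbit H y := by
  have exists_mem_B {z : V} (hz : z ≠ 0) : ∃ b : B, b ≠ 0 ∧ orbit H z = orbit H (b : V) := by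
    by_cases hzA : z ∈ A
    · obtain ⟨z', hz', hzz'⟩ := exists_notMem_orbit_eq_of_mem hAB hHA hHW hWA
        (a := ⟨z, hzA⟩) (by simpa using hz)
      obtain ⟨b, hb, hz'b⟩ := exists_mem_orbit_eq_of_notMem hAB hB hHA hHB hHW hWBA hWB hz'
      exact ⟨b, hb, hzz'.trans hz'b⟩
    · exact exists_mem_orbit_eq_of_notMem hAB hB hHA hHB hHW hWBA hWB hzA
  obtain ⟨b, hb, hxb⟩ := exists_mem_B hx
  obtain ⟨b', hb', hyb'⟩ := exists_mem_B hy
  have hbb' : orbit H (b : V) = orbit H (b' : V) := by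
    simpa only [ZeroMemClass.coe_zero, add_zero] using
      orbit_add_eq_of_blockSpecialLinear_le hAB.symm hHB hB hb hb' 0
  rw [hxb, hbb', hyb']

end Orbit

theorem stmt12_general {K V : Type*} [Field K] [AddCommGroup V] [Module K V]
    [FiniteDimensional K V] (A B : Submodule K V) (hAB : IsCompl A B)
    (hB : 1 < Module.finrank K B) (W : V ≃ₗ[K] V) (hWA : A.map (W : V →ₗ[K] V) ≠ A)
    (hWB : B.map (W : V →ₗ[K] V) ≠ B) (hWBA : ¬ B.map (W : V →ₗ[K] V) ≤ A) :
    ∀ ψ φ : V, ψ ≠ 0 → φ ≠ 0 →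
      ∃ T ∈ Subgroup.closure
          ((blockSpecialLinear A B : Set (V ≃ₗ[K] V)) ∪ blockSpecialLinear B A ∪ {W}),
        T ψ = φ := by
  intro ψ φ hψ hφ
  set H := Subgroup.closure
    ((blockSpecialLinear A B : Set (V ≃ₗ[K] V)) ∪ blockSpecialLinear B A ∪ {W})
  have hHA : blockSpecialLinear A B ≤ H := fun _ hS ↦ Subgroup.subset_closure (.inl (.inl hS))
  have hHB : blockSpecialLinear B A ≤ H := fun _ hS ↦ Subgroup.subset_closure (.inl (.inr hS))
  have hHW : W ∈ H := Subgroup.subset_closure (.inr rfl)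
  have horbit : MulAction.orbit H φ = MulAction.orbit H ψ :=
    orbit_eq_orbit_of_ne_zero hAB hB hHA hHB hHW (not_map_le_of_map_ne hWA) hWBA
      (not_map_le_of_map_ne hWB) hφ hψ
  obtain ⟨⟨T, hT⟩, hTψ⟩ := MulAction.orbit_eq_iff.1 horbit
  exact ⟨T, hT, hTψ⟩

/-- Transitivity on nonzero vectors: under the bridge-lemma hypotheses, the subgroup
generated by the determinant-one automorphisms supported on `A`, those supported on
`B`, and the bridge `W`, acts transitively on `C \ {0}`. -/
theorem stmt12 {C : Type*} [AddCommGroup C] [Module ℂ C] [FiniteDimensional ℂ C]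
    (A B : Submodule ℂ C) (hAB : IsCompl A B)
    (hdim : Module.finrank ℂ A < Module.finrank ℂ B) (hA : 1 ≤ Module.finrank ℂ A)
    (W : C ≃ₗ[ℂ] C) (hWdet : LinearMap.det (W : C →ₗ[ℂ] C) = 1)
    (hWA : A.map (W : C →ₗ[ℂ] C) ≠ A) (hWB : B.map (W : C →ₗ[ℂ] C) ≠ B) :
    ∀ ψ φ : C, ψ ≠ 0 → φ ≠ 0 →
      ∃ T ∈ Subgroup.closure
          ({S : C ≃ₗ[ℂ] C | LinearMap.det (S : C →ₗ[ℂ] C) = 1 ∧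
              A.map (S : C →ₗ[ℂ] C) = A ∧ ∀ b ∈ B, S b = b} ∪
            {S : C ≃ₗ[ℂ] C | LinearMap.det (S : C →ₗ[ℂ] C) = 1 ∧
              B.map (S : C →ₗ[ℂ] C) = B ∧ ∀ a ∈ A, S a = a} ∪
            {W}),
        T ψ = φ :=
  stmt12_general A B hAB (hA.trans_lt hdim) W hWA hWB fun h ↦
    hdim.not_ge (LinearEquiv.finrank_map_eq W B ▸ Submodule.finrank_mono h)
end

section
/- (Non-unitary Solovay–Kitaev theorem, existence form.) For every n ≥ 2 and every R > 0 there exist ε₀ > 0 and constants C > 0, c > 0 (depending only on n and R) with the following property. Let 𝒢 be a finite subset of SL(n,ℂ) closed under taking inverses which is an ε₀-net of B_R = { V ∈ SL(n,ℂ) : ‖V − I‖ < R }, i.e. for every V ∈ B_R there is g ∈ 𝒢 with ‖V − g‖ ≤ ε₀. Then for every V ∈ B_R and every δ with 0 < δ < 1, there exist k ≤ C·(1 + log(1/δ))^c and elements g₁, …, g_k ∈ 𝒢 such that ‖V − g₁·g₂⋯g_k‖ < δ. -/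
/-- The operator norm (ℓ² → ℓ²) of a square complex matrix. -/
noncomputable def opNorm {n : ℕ} (M : Matrix (Fin n) (Fin n) ℂ) : ℝ :=
  ‖Matrix.toEuclideanCLM (𝕜 := ℂ) M‖

/-!
Trace-zero matrices are linear combinations of commutators `⁅N, M⁆` of nilpotent matrices, and
`1 + t • N` has determinant `1`. Suppose a symmetric set `S` approximates the ball around `1` to
precision `s ^ 2`, and `U` in the ball is within `O(s ^ 2)` of `w ∈ S`. Then `U * w⁻¹ = 1 + v` with
`v = O(s ^ 2)`, and `det (1 + v) = 1` makes the trace of `v` of order `s ^ 4`, so `v` is, up to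
`O(s ^ 4)`, a sum of boundedly many commutators `⁅a, b⁆` of nilpotent `a, b = O(s)`. Replacing
`1 + a` and `1 + b` by elements `A, B ∈ S`, the group commutator `⁅A, B⁆` equals `1 + ⁅a, b⁆` up
to `O(s ^ 3)`. Hence words of a fixed length in `S` reach precision `O(s ^ 3)`, and iterating makes
the precision decay like `exp (-2 * (3 / 2) ^ k)` with words of length `m ^ k`.
-/

open Matrix Filter Asymptotics Topology
open scoped Matrix.Norms.L2Operator Pointwise commutatorElement

section NormedRing

variable {𝔸 : Type*} [NormedRing 𝔸]

lemma norm_lie_le_two_mul (x y : 𝔸) : ‖⁅x, y⁆‖ ≤ 2 * ‖x‖ * ‖y‖ :=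
  calc ‖x * y - y * x‖ ≤ ‖x * y‖ + ‖y * x‖ := norm_sub_le _ _
    _ ≤ ‖x‖ * ‖y‖ + ‖y‖ * ‖x‖ := add_le_add (norm_mul_le _ _) (norm_mul_le _ _)
    _ = 2 * ‖x‖ * ‖y‖ := by ring

lemma norm_lie_sub_lie_le (p q a b : 𝔸) :
    ‖⁅p, q⁆ - ⁅a, b⁆‖ ≤ 2 * ‖p - a‖ * ‖q‖ + 2 * ‖a‖ * ‖q - b‖ :=
  calc ‖⁅p, q⁆ - ⁅a, b⁆‖ = ‖⁅p - a, q⁆ + ⁅a, q - b⁆‖ := by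
        simp only [Ring.lie_def]
        congr 1
        noncomm_ring
    _ ≤ ‖⁅p - a, q⁆‖ + ‖⁅a, q - b⁆‖ := norm_add_le _ _
    _ ≤ 2 * ‖p - a‖ * ‖q‖ + 2 * ‖a‖ * ‖q - b‖ :=
      add_le_add (norm_lie_le_two_mul _ _) (norm_lie_le_two_mul _ _)

lemma norm_mul_sub_one_le (x y : 𝔸) :
    ‖x * y - 1‖ ≤ ‖x - 1‖ + ‖y - 1‖ + ‖x - 1‖ * ‖y - 1‖ := by
  rw [show x * y - 1 = (x - 1) + (y - 1) + (x - 1) * (y - 1) by noncomm_ring]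
  exact norm_add₃_le.trans (by gcongr; exact norm_mul_le _ _)

lemma norm_mul_le_two_mul_of_norm_sub_one_le_one {y : 𝔸} (hy : ‖y - 1‖ ≤ 1)
    (x : 𝔸) : ‖x * y‖ ≤ 2 * ‖x‖ :=
  calc ‖x * y‖ = ‖x + x * (y - 1)‖ := by rw [mul_sub, mul_one, add_sub_cancel]
    _ ≤ ‖x‖ + ‖x‖ * 1 := (norm_add_le _ _).trans <| by
        gcongr
        exact (norm_mul_le _ _).trans (by gcongr)
    _ = 2 * ‖x‖ := by ring

lemma norm_mul_sub_one_sub_add_le (w₁ w₂ x y : 𝔸) :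
    ‖w₁ * w₂ - 1 - (x + y)‖ ≤ ‖w₁ - 1 - x‖ + ‖w₂ - 1 - y‖ + ‖w₁ - 1‖ * ‖w₂ - 1‖ := by
  rw [show w₁ * w₂ - 1 - (x + y) = (w₁ - 1 - x) + (w₂ - 1 - y) + (w₁ - 1) * (w₂ - 1) by
    noncomm_ring]
  exact norm_add₃_le.trans (by gcongr; exact norm_mul_le _ _)

lemma norm_units_inv_sub_one_le {u : 𝔸ˣ} (hu : ‖(u : 𝔸) - 1‖ ≤ 1 / 2) :
    ‖((u⁻¹ : 𝔸ˣ) : 𝔸) - 1‖ ≤ 2 * ‖(u : 𝔸) - 1‖ := by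
  set x : 𝔸 := ↑u⁻¹ - 1 with hx
  have expand : x = -(x * (u - 1)) - (u - 1) := by
    rw [hx]
    noncomm_ring
    simp
  have : ‖x‖ ≤ ‖x‖ * (1 / 2) + ‖(u : 𝔸) - 1‖ :=
    calc ‖x‖ ≤ ‖x * (u - 1)‖ + ‖(u : 𝔸) - 1‖ := by
          conv_lhs => rw [expand]
          exact (norm_sub_le _ _).trans_eq (by rw [norm_neg])
      _ ≤ ‖x‖ * (1 / 2) + ‖(u : 𝔸) - 1‖ := by
          gcongr
          exact (norm_mul_le _ _).trans (by gcongr)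
  linarith

lemma norm_commutatorElement_sub_one_sub_lie_le {A B : 𝔸ˣ} {η : ℝ} (hη : η ≤ 1 / 2)
    (hA : ‖(A : 𝔸) - 1‖ ≤ η) (hB : ‖(B : 𝔸) - 1‖ ≤ η) :
    ‖((⁅A, B⁆ : 𝔸ˣ) : 𝔸) - 1 - ⁅(A : 𝔸) - 1, (B : 𝔸) - 1⁆‖ ≤ 12 * η ^ 3 := by
  have hη₀ : 0 ≤ η := (norm_nonneg _).trans hA
  have factor : ((⁅A, B⁆ : 𝔸ˣ) : 𝔸) - 1 =
      ⁅(A : 𝔸) - 1, (B : 𝔸) - 1⁆ * (↑A⁻¹ * ↑B⁻¹) := by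
    have cancel : (B * A * (A⁻¹ * B⁻¹) : 𝔸) = 1 := by simp [mul_assoc]
    rw [commutatorElement_def, Ring.lie_def]
    nth_rw 1 [← cancel]
    push_cast
    noncomm_ring
  have hAB : ‖(↑A⁻¹ * ↑B⁻¹ : 𝔸) - 1‖ ≤ 6 * η := by
    have hA' := (norm_units_inv_sub_one_le (hA.trans hη)).trans
      (mul_le_mul_of_nonneg_left hA zero_le_two)
    have hB' := (norm_units_inv_sub_one_le (hB.trans hη)).trans
      (mul_le_mul_of_nonneg_left hB zero_le_two)
    calc _ ≤ 2 * η + 2 * η + 2 * η * (2 * η) := (norm_mul_sub_one_le _ _).trans (by gcongr)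
      _ ≤ 6 * η := by nlinarith
  calc _ = ‖⁅(A : 𝔸) - 1, (B : 𝔸) - 1⁆ * (↑A⁻¹ * ↑B⁻¹ - 1)‖ := by
        rw [factor, mul_sub, mul_one]
    _ ≤ 2 * η * η * (6 * η) := (norm_mul_le _ _).trans <| by
        gcongr
        exact (norm_lie_le_two_mul _ _).trans (by gcongr)
    _ = 12 * η ^ 3 := by ring

lemma norm_commutatorElement_sub_one_sub_lie_le_of_approx {A B : 𝔸ˣ} {a b : 𝔸} {κ s : ℝ}
    (hκ : 0 ≤ κ) (hs : 0 ≤ s) (hs₁ : s ≤ 1) (hκs : (κ + 1) * s ≤ 1 / 2)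
    (ha : ‖a‖ ≤ κ * s) (hb : ‖b‖ ≤ κ * s)
    (hA : ‖(A : 𝔸) - 1 - a‖ ≤ s ^ 2) (hB : ‖(B : 𝔸) - 1 - b‖ ≤ s ^ 2) :
    ‖((⁅A, B⁆ : 𝔸ˣ) : 𝔸) - 1 - ⁅a, b⁆‖ ≤ (12 * (κ + 1) ^ 3 + 4 * (κ + 1)) * s ^ 3 := by
  have near {X x : 𝔸} (hx : ‖x‖ ≤ κ * s) (hX : ‖X - 1 - x‖ ≤ s ^ 2) :
      ‖X - 1‖ ≤ (κ + 1) * s :=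
    calc ‖X - 1‖ ≤ ‖x‖ + ‖X - 1 - x‖ := norm_le_norm_add_norm_sub' _ _
      _ ≤ (κ + 1) * s := by nlinarith
  have hA₁ := near ha hA
  have hB₁ := near hb hB
  calc _ ≤ ‖((⁅A, B⁆ : 𝔸ˣ) : 𝔸) - 1 - ⁅(A : 𝔸) - 1, (B : 𝔸) - 1⁆‖ +
        ‖⁅(A : 𝔸) - 1, (B : 𝔸) - 1⁆ - ⁅a, b⁆‖ := norm_sub_le_norm_sub_add_norm_sub _ _ _
    _ ≤ 12 * ((κ + 1) * s) ^ 3 + (2 * s ^ 2 * ((κ + 1) * s) + 2 * ((κ + 1) * s) * s ^ 2) := by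
        refine add_le_add (norm_commutatorElement_sub_one_sub_lie_le hκs hA₁ hB₁)
          ((norm_lie_sub_lie_le _ _ _ _).trans ?_)
        gcongr
        linarith
    _ = (12 * (κ + 1) ^ 3 + 4 * (κ + 1)) * s ^ 3 := by ring

end NormedRing

section SpecialLinearLieAlgebra

variable {ι K : Type*} [Fintype ι] [DecidableEq ι]

lemma det_one_add_of_isNilpotent [CommRing K] [IsDomain K] {N : Matrix ι ι K}
    (hN : IsNilpotent N) : (1 + N).det = 1 := by
  have charpoly_neg : (-N).charpoly = Polynomial.X ^ Fintype.card ι :=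
    sub_eq_zero.1 (isNilpotent_charpoly_sub_pow_of_isNilpotent hN.neg).eq_zero
  simpa [charpoly_neg] using (Matrix.eval_charpoly (-N) 1).symm

lemma isNilpotent_single [Semiring K] {i j : ι} (hij : i ≠ j) (x : K) :
    IsNilpotent (single i j x) :=
  ⟨2, by rw [pow_two, single_mul_single_of_ne _ _ _ _ hij.symm]⟩

/-- The additive commutators of pairs of nilpotent matrices. -/
def nilpotentCommutators (ι K : Type*) [Fintype ι] [DecidableEq ι] [Ring K] :
    Set (Matrix ι ι K) :=
  {X | ∃ N M : Matrix ι ι K, IsNilpotent N ∧ IsNilpotent M ∧ ⁅N, M⁆ = X}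

lemma single_sub_single_mem_span_nilpotentCommutators [CommRing K] (i j : ι) :
    single i i 1 - single j j 1 ∈ Submodule.span K (nilpotentCommutators ι K) := by
  obtain rfl | hij := eq_or_ne i j
  · simp
  · exact Submodule.subset_span ⟨single i j 1, single j i 1, isNilpotent_single hij 1,
      isNilpotent_single hij.symm 1, by simp [Ring.lie_def]⟩

lemma single_mem_span_nilpotentCommutators [CommRing K] [Invertible (2 : K)] {i j : ι}
    (hij : i ≠ j) : single i j 1 ∈ Submodule.span K (nilpotentCommutators ι K) := by
  set E : Matrix ι ι K := single i j 1 with hE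
  set F : Matrix ι ι K := single j i 1 with hF
  have hEE : E * E = 0 := single_mul_single_of_ne _ _ _ _ hij.symm _
  have hFF : F * F = 0 := single_mul_single_of_ne _ _ _ _ hij _
  have hEFE : E * F * E = E := by simp [hE, hF]
  have conj_nilpotent : IsNilpotent ((1 + E) * F * (1 - E)) := by
    refine ⟨2, ?_⟩
    have : ((1 + E) * F * (1 - E)) ^ 2 =
        (1 + E) * (F * F) * (1 - E) - (1 + E) * F * (E * E) * F * (1 - E) := by noncomm_ring
    simp only [this, hEE, hFF, mul_zero, zero_mul, sub_zero]
  have lie_conj : ⁅(1 + E) * F * (1 - E), E⁆ = (2 : K) • E - (single i i 1 - single j j 1) := by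
    rw [← show E * F = single i i 1 by simp [hE, hF], ← show F * E = single j j 1 by simp [hE, hF],
      Ring.lie_def]
    have : (1 + E) * F * (1 - E) * E - E * ((1 + E) * F * (1 - E)) =
        E * F * E + E * F * E - (E * F - F * E) - (1 + E) * F * (E * E) - E * E * F * (1 - E) := by
      noncomm_ring
    simp only [this, hEE, hEFE, mul_zero, zero_mul, sub_zero, two_smul]
  have two_smul_mem : (2 : K) • E ∈ Submodule.span K (nilpotentCommutators ι K) :=
    ((Submodule.span K _).sub_mem_iff_left
      (single_sub_single_mem_span_nilpotentCommutators i j)).1 <|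
      Submodule.subset_span ⟨_, E, conj_nilpotent, isNilpotent_single hij 1, lie_conj⟩
  simpa using Submodule.smul_mem _ (⅟2 : K) two_smul_mem

lemma mem_span_nilpotentCommutators_of_trace_eq_zero [CommRing K] [Invertible (2 : K)]
    {v : Matrix ι ι K} (hv : v.trace = 0) :
    v ∈ Submodule.span K (nilpotentCommutators ι K) := by
  obtain _ | ⟨⟨o⟩⟩ := isEmpty_or_nonempty ι
  · simp [Subsingleton.elim v 0]
  have expand : v = ∑ i, ∑ j, v i j • (single i j 1 - if i = j then single o o 1 else 0) := by
    have trace_smul : ∑ i, v i i • single o o (1 : K) = 0 := by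
      rw [← Finset.sum_smul, show ∑ i, v i i = 0 from hv, zero_smul]
    simp only [smul_sub, Finset.sum_sub_distrib, smul_ite, smul_zero, Finset.sum_ite_eq,
      Finset.mem_univ, if_true, trace_smul, sub_zero]
    simpa only [smul_single, smul_eq_mul, mul_one] using matrix_eq_sum_single v
  rw [expand]
  refine Submodule.sum_mem _ fun i _ => Submodule.sum_mem _ fun j _ => Submodule.smul_mem _ _ ?_
  obtain rfl | hij := eq_or_ne i j
  · simpa using single_sub_single_mem_span_nilpotentCommutators i o
  · simpa [hij] using single_mem_span_nilpotentCommutators hij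

end SpecialLinearLieAlgebra

section Trace

variable {ι 𝕜 : Type*} [Fintype ι] [DecidableEq ι] [RCLike 𝕜]

lemma analyticAt_matrix_det (A : Matrix ι ι 𝕜) :
    AnalyticAt 𝕜 (det : Matrix ι ι 𝕜 → 𝕜) A := by
  have entry (i j : ι) : AnalyticAt 𝕜 (fun M : Matrix ι ι 𝕜 => M i j) A :=
    (entryLinearMap 𝕜 𝕜 i j).toContinuousLinearMap.analyticAt A
  simp only [funext det_apply']
  exact Finset.univ.analyticAt_fun_sum fun σ _ =>
    analyticAt_const.mul (Finset.univ.analyticAt_fun_prod fun i _ => entry (σ i) i)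

lemma fderiv_det_one (v : Matrix ι ι 𝕜) :
    fderiv 𝕜 (det : Matrix ι ι 𝕜 → 𝕜) 1 v = v.trace := by
  have along_fderiv : HasDerivAt (fun t : 𝕜 => (1 + t • v).det) (fderiv 𝕜 det 1 v) 0 :=
    (analyticAt_matrix_det 1).differentiableAt.hasFDerivAt.hasLineDerivAt v
  have along_expansion : HasDerivAt (fun t : 𝕜 => (1 + t • v).det) v.trace 0 := by
    have eval_eq : (fun t : 𝕜 => (1 + t • v).det) =
        fun t => (1 + (Polynomial.X : Polynomial 𝕜) • v.map Polynomial.C).det.eval t := by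
      ext t
      simp [eval_det, ← smul_eq_mul_diagonal]
    rw [eval_eq, ← derivative_det_one_add_X_smul]
    exact Polynomial.hasDerivAt _ 0
  exact along_fderiv.unique along_expansion

lemma det_one_add_sub_one_sub_trace_isBigO :
    (fun v : Matrix ι ι 𝕜 => (1 + v).det - 1 - v.trace) =O[𝓝 0] fun v => ‖v‖ ^ 2 := by
  obtain ⟨p, hp⟩ := analyticAt_matrix_det (1 : Matrix ι ι 𝕜)
  refine (hp.isBigO_sub_partialSum_pow 2).congr_left fun v => ?_
  have linear_term : (p 1 fun _ => v) = v.trace := by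
    rw [← fderiv_det_one, hp.fderiv_eq]
    rfl
  have constant_term : (p 0 fun _ => v) = 1 := by rw [hp.coeff_zero, det_one]
  simp [FormalMultilinearSeries.partialSum, Finset.sum_range_succ, linear_term, constant_term,
    sub_sub]

/-- The projection of a matrix onto the trace-zero matrices along the scalar matrices. -/
noncomputable def tracelessPart : Matrix ι ι 𝕜 →L[𝕜] Matrix ι ι 𝕜 :=
  LinearMap.toContinuousLinearMap
    (LinearMap.id - (traceLinearMap ι 𝕜 𝕜).smulRight ((Fintype.card ι : 𝕜)⁻¹ • 1))

lemma tracelessPart_apply (v : Matrix ι ι 𝕜) :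
    tracelessPart v = v - v.trace • (Fintype.card ι : 𝕜)⁻¹ • (1 : Matrix ι ι 𝕜) := rfl

lemma trace_tracelessPart (v : Matrix ι ι 𝕜) : (tracelessPart v).trace = 0 := by
  obtain _ | _ := isEmpty_or_nonempty ι
  · simp [trace]
  · simp [tracelessPart_apply]

lemma sub_tracelessPart_isBigO :
    (fun v : Matrix ι ι 𝕜 => v - tracelessPart v) =O[𝓝[{v | (1 + v).det = 1}] 0]
      fun v => ‖v‖ ^ 2 := by
  have trace_isBigO : (fun v : Matrix ι ι 𝕜 => v.trace) =O[𝓝[{v | (1 + v).det = 1}] 0]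
      fun v => ‖v‖ ^ 2 := by
    refine (det_one_add_sub_one_sub_trace_isBigO.mono nhdsWithin_le_nhds).neg_left.congr'
      ?_ .rfl
    filter_upwards [self_mem_nhdsWithin] with v hv
    rw [hv, sub_self, zero_sub, neg_neg]
  refine IsBigO.trans (IsBigO.congr_left (ContinuousLinearMap.isBigO_comp
    (ContinuousLinearMap.toSpanSingleton 𝕜 ((Fintype.card ι : 𝕜)⁻¹ • (1 : Matrix ι ι 𝕜)))
    trace _) fun v => ?_) trace_isBigO
  simp [tracelessPart_apply]

end Trace

section Approximation

variable {ι 𝕜 : Type*} [Fintype ι] [DecidableEq ι] [RCLike 𝕜]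

lemma eventually_nhdsGT_zero_mul_le (K : ℝ) {t : ℝ} (ht : 0 < t) :
    ∀ᶠ s in 𝓝[>] (0 : ℝ), K * s ≤ t :=
  (((continuous_const_mul K).tendsto' 0 0 (mul_zero K)).mono_left
    nhdsWithin_le_nhds).eventually_le_const ht

lemma exists_mul_eq_norm_eq_sqrt (x : 𝕜) :
    ∃ y z : 𝕜, y * z = x ∧ ‖y‖ = √‖x‖ ∧ ‖z‖ = √‖x‖ := by
  obtain ⟨c, hc, hx⟩ := RCLike.exists_norm_mul_eq_self x
  refine ⟨c * (√‖x‖ : ℝ), (√‖x‖ : ℝ), ?_, ?_, ?_⟩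
  · rw [mul_assoc, ← RCLike.ofReal_mul, Real.mul_self_sqrt (norm_nonneg x), hx]
  all_goals simp [hc]

lemma commutatorElement_mem_pow_four {G : Type*} [Group G] {S : Set G} (hS : S⁻¹ = S) {g h : G}
    (hg : g ∈ S) (hh : h ∈ S) : ⁅g, h⁆ ∈ S ^ 4 := by
  have inv_mem {x : G} (hx : x ∈ S) : x⁻¹ ∈ S := by rwa [← Set.mem_inv, hS]
  rw [pow_succ, pow_succ, pow_two]
  exact Set.mul_mem_mul (Set.mul_mem_mul (Set.mul_mem_mul hg hh) (inv_mem hg)) (inv_mem hh)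

/-- `S` is an `ε`-net of the closed ball of radius `r` around the identity in the special linear
group: the approximation property of a set of gates at precision `ε`. -/
def IsBallNet (S : Set (SpecialLinearGroup ι 𝕜)) (r ε : ℝ) : Prop :=
  ∀ U : SpecialLinearGroup ι 𝕜, ‖(U : Matrix ι ι 𝕜) - 1‖ ≤ r →
    ∃ w ∈ S, ‖(U : Matrix ι ι 𝕜) - w‖ ≤ ε

lemma IsBallNet.exists_norm_sub_one_sub_le {S : Set (SpecialLinearGroup ι 𝕜)} {r ε : ℝ}
    (hS : IsBallNet S r ε) {N : Matrix ι ι 𝕜} (hN : IsNilpotent N) (hNr : ‖N‖ ≤ r) :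
    ∃ w ∈ S, ‖(w : Matrix ι ι 𝕜) - 1 - N‖ ≤ ε := by
  obtain ⟨w, hw, hUw⟩ := hS ⟨1 + N, det_one_add_of_isNilpotent hN⟩ (by simpa using hNr)
  exact ⟨w, hw, by rwa [sub_sub, norm_sub_rev]⟩

/-- For all small `s`, every symmetric `s ^ 2`-net `S` approximates each `1 + φ v` with
`‖v‖ ≤ 2 * s ^ 2` to precision `O(s ^ 3)` by a word of fixed length in `S`. The factor `2` leaves
room for the errors `(U - w) * w⁻¹` of the net, whose second factor may have norm above `1`. -/
def IsApproximable (r : ℝ) (φ : Matrix ι ι 𝕜 →L[𝕜] Matrix ι ι 𝕜) : Prop :=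
  ∃ (m : ℕ) (C : ℝ), ∀ᶠ s in 𝓝[>] (0 : ℝ), ∀ S : Set (SpecialLinearGroup ι 𝕜),
    S⁻¹ = S → IsBallNet S r (s ^ 2) → ∀ v : Matrix ι ι 𝕜, ‖v‖ ≤ 2 * s ^ 2 →
      ∃ w ∈ S ^ m, ‖(w : Matrix ι ι 𝕜) - 1 - φ v‖ ≤ C * s ^ 3

variable {r : ℝ}

lemma isApproximable_zero : IsApproximable r (0 : Matrix ι ι 𝕜 →L[𝕜] Matrix ι ι 𝕜) :=
  ⟨0, 0, .of_forall fun _ _ _ _ _ _ => ⟨1, by simp, by simp⟩⟩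

lemma IsApproximable.add {φ ψ : Matrix ι ι 𝕜 →L[𝕜] Matrix ι ι 𝕜} (hφ : IsApproximable r φ)
    (hψ : IsApproximable r ψ) : IsApproximable r (φ + ψ) := by
  obtain ⟨m, C, hm⟩ := hφ
  obtain ⟨n, D, hn⟩ := hψ
  refine ⟨m + n, C + D + (2 * ‖φ‖ + |C|) * (2 * ‖ψ‖ + |D|), ?_⟩
  filter_upwards [hm, hn, self_mem_nhdsWithin, eventually_nhdsGT_zero_mul_le 1 one_pos]
    with s hm hn (hs : 0 < s) hs₁ S hS hnet v hv
  rw [one_mul] at hs₁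
  obtain ⟨w₁, hw₁, h₁⟩ := hm S hS hnet v hv
  obtain ⟨w₂, hw₂, h₂⟩ := hn S hS hnet v hv
  have near_one {w : Matrix ι ι 𝕜} {χ : Matrix ι ι 𝕜 →L[𝕜] Matrix ι ι 𝕜} {E : ℝ}
      (hw : ‖w - 1 - χ v‖ ≤ E * s ^ 3) : ‖w - 1‖ ≤ (2 * ‖χ‖ + |E|) * s ^ 2 :=
    calc ‖w - 1‖ ≤ ‖χ v‖ + ‖w - 1 - χ v‖ := norm_le_norm_add_norm_sub' _ _
      _ ≤ ‖χ‖ * (2 * s ^ 2) + |E| * s ^ 2 := by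
          refine add_le_add (χ.le_opNorm_of_le hv) (hw.trans ?_)
          exact mul_le_mul (le_abs_self E) (pow_le_pow_of_le_one hs.le hs₁ (by norm_num))
            (by positivity) (abs_nonneg E)
      _ = (2 * ‖χ‖ + |E|) * s ^ 2 := by ring
  refine ⟨w₁ * w₂, pow_add S m n ▸ Set.mul_mem_mul hw₁ hw₂, ?_⟩
  calc _ ≤ C * s ^ 3 + D * s ^ 3 +
        (2 * ‖φ‖ + |C|) * s ^ 2 * ((2 * ‖ψ‖ + |D|) * s ^ 2) :=
        (norm_mul_sub_one_sub_add_le (w₁ : Matrix ι ι 𝕜) w₂ _ _).trans <|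
          add_le_add (add_le_add h₁ h₂) (mul_le_mul (near_one h₁) (near_one h₂)
            (norm_nonneg _) (by positivity))
    _ = C * s ^ 3 + D * s ^ 3 + (2 * ‖φ‖ + |C|) * (2 * ‖ψ‖ + |D|) * s ^ 4 := by ring
    _ ≤ C * s ^ 3 + D * s ^ 3 + (2 * ‖φ‖ + |C|) * (2 * ‖ψ‖ + |D|) * s ^ 3 := by
        gcongr _ + _ * ?_
        exact pow_le_pow_of_le_one hs.le hs₁ (by norm_num)
    _ = _ := by ring

lemma isApproximable_smulRight_lie (hr : 0 < r) (z : Matrix ι ι 𝕜 →L[𝕜] 𝕜) {N M : Matrix ι ι 𝕜}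
    (hN : IsNilpotent N) (hM : IsNilpotent M) : IsApproximable r (z.smulRight ⁅N, M⁆) := by
  set κ := √(2 * ‖z‖) * (‖N‖ + ‖M‖) with hκ
  have κ_nonneg : 0 ≤ κ := by positivity
  refine ⟨4, 12 * (κ + 1) ^ 3 + 4 * (κ + 1), ?_⟩
  filter_upwards [self_mem_nhdsWithin, eventually_nhdsGT_zero_mul_le 1 one_pos,
    eventually_nhdsGT_zero_mul_le (κ + 1) one_half_pos, eventually_nhdsGT_zero_mul_le κ hr]
    with s (hs : 0 < s) hs₁ hκs hκr S hS hnet v hv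
  have sqrt_le : √‖z v‖ ≤ √(2 * ‖z‖) * s := by
    refine Real.sqrt_le_iff.2 ⟨by positivity, (z.le_opNorm_of_le hv).trans_eq ?_⟩
    rw [mul_pow, Real.sq_sqrt (by positivity)]
    ring
  obtain ⟨x, y, hxy, hx, hy⟩ := exists_mul_eq_norm_eq_sqrt (z v)
  have approx {X : Matrix ι ι 𝕜} (hX : IsNilpotent X) (hXκ : ‖X‖ ≤ ‖N‖ + ‖M‖) {t : 𝕜}
      (ht : ‖t‖ = √‖z v‖) :
      ‖t • X‖ ≤ κ * s ∧ ∃ A ∈ S, ‖(A : Matrix ι ι 𝕜) - 1 - t • X‖ ≤ s ^ 2 := by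
    have norm_le : ‖t • X‖ ≤ κ * s :=
      calc ‖t • X‖ ≤ √(2 * ‖z‖) * s * (‖N‖ + ‖M‖) := by
            rw [norm_smul, ht]
            gcongr
        _ = κ * s := by rw [hκ]; ring
    exact ⟨norm_le, hnet.exists_norm_sub_one_sub_le (hX.smul t) (norm_le.trans hκr)⟩
  obtain ⟨ha, A, hA, hAa⟩ := approx hN (le_add_of_nonneg_right (norm_nonneg M)) hx
  obtain ⟨hb, B, hB, hBb⟩ := approx hM (le_add_of_nonneg_left (norm_nonneg N)) hy
  refine ⟨⁅A, B⁆, commutatorElement_mem_pow_four hS hA hB, ?_⟩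
  have lie_eq : z.smulRight ⁅N, M⁆ v = ⁅x • N, y • M⁆ := by
    rw [ContinuousLinearMap.smulRight_apply, ← hxy]
    simp [Ring.lie_def, smul_sub, smul_smul, mul_comm]
  have := norm_commutatorElement_sub_one_sub_lie_le_of_approx (A := A.toGL) (B := B.toGL)
    κ_nonneg hs.le (by linarith) hκs ha hb hAa hBb
  rwa [← map_commutatorElement, ← lie_eq] at this

lemma isApproximable_smulRight_of_mem_span (hr : 0 < r) {X : Matrix ι ι 𝕜}
    (hX : X ∈ Submodule.span 𝕜 (nilpotentCommutators ι 𝕜)) (z : Matrix ι ι 𝕜 →L[𝕜] 𝕜) :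
    IsApproximable r (z.smulRight X) := by
  induction hX using Submodule.span_induction generalizing z with
  | mem X hX =>
    obtain ⟨N, M, hN, hM, rfl⟩ := hX
    exact isApproximable_smulRight_lie hr z hN hM
  | zero => simpa using isApproximable_zero
  | add X Y _ _ hX hY =>
    convert (hX z).add (hY z) using 1
    ext1 v
    simp
  | smul a X _ hX =>
    convert hX (a • z) using 1
    ext1 v
    simp [smul_smul, mul_comm]

lemma isApproximable_tracelessPart (hr : 0 < r) :
    IsApproximable r (tracelessPart : Matrix ι ι 𝕜 →L[𝕜] Matrix ι ι 𝕜) := by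
  let b := Module.finBasis 𝕜 (Matrix ι ι 𝕜)
  have expand : (tracelessPart : Matrix ι ι 𝕜 →L[𝕜] Matrix ι ι 𝕜) =
      ∑ k, ((b.coord k).toContinuousLinearMap).smulRight (tracelessPart (b k)) := by
    ext1 v
    conv_lhs => rw [← b.sum_repr v, map_sum]
    simp
  rw [expand]
  exact Finset.sum_induction _ _ (fun _ _ => IsApproximable.add) isApproximable_zero fun k _ =>
    isApproximable_smulRight_of_mem_span hr
      (mem_span_nilpotentCommutators_of_trace_eq_zero (trace_tracelessPart _)) _

end Approximation

section Contraction

variable {ι 𝕜 : Type*} [Fintype ι] [DecidableEq ι] [RCLike 𝕜] {r : ℝ}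

lemma eventually_norm_sub_tracelessPart_le :
    ∃ D : ℝ, ∀ᶠ s in 𝓝[>] (0 : ℝ), ∀ v : Matrix ι ι 𝕜, (1 + v).det = 1 → ‖v‖ ≤ 2 * s ^ 2 →
      ‖v - tracelessPart v‖ ≤ D * s ^ 3 := by
  obtain ⟨D, hD₀, hD⟩ := (sub_tracelessPart_isBigO (ι := ι) (𝕜 := 𝕜)).exists_nonneg
  obtain ⟨ρ, hρ, h⟩ := Metric.eventually_nhds_iff_ball.1 (eventually_nhdsWithin_iff.1 hD.bound)
  refine ⟨4 * D, ?_⟩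
  filter_upwards [self_mem_nhdsWithin, eventually_nhdsGT_zero_mul_le 1 one_pos,
    eventually_nhdsGT_zero_mul_le 2 (half_pos hρ)] with s (hs : 0 < s) hs₁ hsρ v hdet hv
  rw [one_mul] at hs₁
  have hvρ : v ∈ Metric.ball 0 ρ := by
    rw [mem_ball_zero_iff]
    nlinarith
  calc ‖v - tracelessPart v‖ ≤ D * ‖v‖ ^ 2 := by simpa using h v hvρ hdet
    _ ≤ D * (2 * s ^ 2) ^ 2 := by gcongr
    _ = 4 * D * s ^ 4 := by ring
    _ ≤ 4 * D * s ^ 3 := by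
        gcongr _ * ?_
        exact pow_le_pow_of_le_one hs.le hs₁ (by norm_num)

lemma coe_sub_coe_mul {K : Type*} [CommRing K] (U w' w : SpecialLinearGroup ι K) :
    (U : Matrix ι ι K) - (w' * w : SpecialLinearGroup ι K) =
      (((U * w⁻¹ : SpecialLinearGroup ι K) : Matrix ι ι K) - w') * w := by
  rw [sub_mul, ← Matrix.SpecialLinearGroup.coe_mul, ← Matrix.SpecialLinearGroup.coe_mul,
    inv_mul_cancel_right]

lemma coe_mul_inv_sub_one {K : Type*} [CommRing K] (U w : SpecialLinearGroup ι K) :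
    ((U * w⁻¹ : SpecialLinearGroup ι K) : Matrix ι ι K) - 1 =
      ((U : Matrix ι ι K) - w) * (w⁻¹ : SpecialLinearGroup ι K) := by
  simpa using coe_sub_coe_mul (U * w⁻¹) w w⁻¹

lemma IsBallNet.exists_norm_mul_inv_sub_one_le {S : Set (SpecialLinearGroup ι 𝕜)} {ε : ℝ}
    (hS : IsBallNet S r ε) (hr : r ≤ 1 / 4) (hε : ε ≤ 1 / 4) {U : SpecialLinearGroup ι 𝕜}
    (hU : ‖(U : Matrix ι ι 𝕜) - 1‖ ≤ r) :
    ∃ w ∈ S, ‖(w : Matrix ι ι 𝕜) - 1‖ ≤ 1 / 2 ∧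
      ‖((U * w⁻¹ : SpecialLinearGroup ι 𝕜) : Matrix ι ι 𝕜) - 1‖ ≤ 2 * ε := by
  obtain ⟨w, hw, hUw⟩ := hS U hU
  have hw₁ : ‖(w.toGL : Matrix ι ι 𝕜) - 1‖ ≤ 1 / 2 :=
    calc ‖(w : Matrix ι ι 𝕜) - 1‖ ≤ ‖(w : Matrix ι ι 𝕜) - U‖ + ‖(U : Matrix ι ι 𝕜) - 1‖ :=
          norm_sub_le_norm_sub_add_norm_sub _ _ _
      _ ≤ 1 / 2 := by
          rw [norm_sub_rev]
          linarith
  have hw_inv : ‖((w⁻¹ : SpecialLinearGroup ι 𝕜) : Matrix ι ι 𝕜) - 1‖ ≤ 1 :=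
    (norm_units_inv_sub_one_le hw₁).trans (by linarith)
  refine ⟨w, hw, hw₁, ?_⟩
  rw [coe_mul_inv_sub_one]
  exact (norm_mul_le_two_mul_of_norm_sub_one_le_one hw_inv _).trans (by gcongr)

lemma eventually_isBallNet_pow (hr : 0 < r) (hr₁ : r ≤ 1 / 4) :
    ∃ (m : ℕ) (C : ℝ), ∀ᶠ s in 𝓝[>] (0 : ℝ), ∀ S : Set (SpecialLinearGroup ι 𝕜),
      S⁻¹ = S → IsBallNet S r (s ^ 2) → IsBallNet (S ^ m) r (C * s ^ 3) := by
  obtain ⟨m, C, hC⟩ := isApproximable_tracelessPart (ι := ι) (𝕜 := 𝕜) hr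
  obtain ⟨D, hD⟩ := eventually_norm_sub_tracelessPart_le (ι := ι) (𝕜 := 𝕜)
  refine ⟨m + 1, 2 * (C + D), ?_⟩
  filter_upwards [hC, hD, self_mem_nhdsWithin, eventually_nhdsGT_zero_mul_le 2 one_pos]
    with s hC hD (hs : 0 < s) hs₁ S hS hnet U hU
  obtain ⟨w, hw, hw₁, hUw⟩ := hnet.exists_norm_mul_inv_sub_one_le hr₁ (by nlinarith) hU
  set v : Matrix ι ι 𝕜 := (U * w⁻¹ : SpecialLinearGroup ι 𝕜) - 1 with hv
  obtain ⟨w', hw', hw'v⟩ := hC S hS hnet v hUw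
  have hdet : (1 + v).det = 1 := by
    rw [hv, add_sub_cancel, Matrix.SpecialLinearGroup.det_coe]
  refine ⟨w' * w, pow_succ S m ▸ Set.mul_mem_mul hw' hw, ?_⟩
  calc _ ≤ 2 * ‖((U * w⁻¹ : SpecialLinearGroup ι 𝕜) : Matrix ι ι 𝕜) - w'‖ := by
        rw [coe_sub_coe_mul]
        exact norm_mul_le_two_mul_of_norm_sub_one_le_one (by linarith) _
    _ = 2 * ‖(v - tracelessPart v) - (w' - 1 - tracelessPart v)‖ := by
        rw [sub_sub_sub_cancel_right, hv, sub_sub_sub_cancel_right]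
    _ ≤ 2 * (D * s ^ 3 + C * s ^ 3) := by
        gcongr
        exact (norm_sub_le _ _).trans (add_le_add (hD v hdet hUw) hw'v)
    _ = 2 * (C + D) * s ^ 3 := by ring

lemma IsBallNet.mono {S : Set (SpecialLinearGroup ι 𝕜)} {ε ε' : ℝ} (hS : IsBallNet S r ε)
    (hε : ε ≤ ε') : IsBallNet S r ε' := fun U hU =>
  let ⟨w, hw, hUw⟩ := hS U hU
  ⟨w, hw, hUw.trans hε⟩

lemma exists_isBallNet_pow_pow (hr : 0 < r) (hr₁ : r ≤ 1 / 4) :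
    ∃ (m : ℕ) (Q : ℝ), 0 < Q ∧ ∀ S : Set (SpecialLinearGroup ι 𝕜), S⁻¹ = S →
      IsBallNet S r ((Real.exp (-1) / Q) ^ 2) →
        ∀ k : ℕ, IsBallNet (S ^ m ^ k) r ((Real.exp (-(3 / 2) ^ k) / Q) ^ 2) := by
  obtain ⟨m, C, hC⟩ := eventually_isBallNet_pow (ι := ι) (𝕜 := 𝕜) hr hr₁
  obtain ⟨s₀, hs₀ : 0 < s₀, h⟩ := mem_nhdsGT_iff_exists_Ioo_subset.1 hC
  obtain ⟨Q, hCQ, hsQ⟩ : ∃ Q, C ≤ Q ∧ s₀⁻¹ ≤ Q := ⟨_, le_max_left _ _, le_max_right _ _⟩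
  have hQ : 0 < Q := (inv_pos.2 hs₀).trans_le hsQ
  refine ⟨m, Q, hQ, fun S hS hnet k => ?_⟩
  induction k with
  | zero => simpa using hnet
  | succ k ih =>
    set s := Real.exp (-(3 / 2) ^ k) / Q with hs
    have s_pos : 0 < s := by positivity
    have s_lt : s < s₀ := by
      rw [hs, div_lt_iff₀ hQ]
      exact (Real.exp_lt_one_iff.2 (neg_lt_zero.2 (by positivity))).trans_le
        ((inv_le_iff_one_le_mul₀' hs₀).1 hsQ)
    have exp_sq : Real.exp (-(3 / 2) ^ (k + 1)) ^ 2 = Real.exp (-(3 / 2) ^ k) ^ 3 := by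
      rw [← Real.exp_nat_mul, ← Real.exp_nat_mul]
      push_cast
      ring_nf
    have hstep := h ⟨s_pos, s_lt⟩ (S ^ m ^ k) (by rw [← inv_pow, hS]) ih
    rw [← pow_mul, ← pow_succ] at hstep
    refine hstep.mono ?_
    calc C * s ^ 3 ≤ Q * s ^ 3 := by gcongr
      _ = (Real.exp (-(3 / 2) ^ (k + 1)) / Q) ^ 2 := by
          rw [div_pow _ Q 2, exp_sq, hs]
          field_simp

end Contraction

section SolovayKitaev

variable {ι 𝕜 : Type*} [Fintype ι] [DecidableEq ι] [RCLike 𝕜]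

lemma exists_le_pow_and_pow_le_mul_rpow {b M x : ℝ} (hb : 1 < b) (hM : 1 < M) (hx : 1 ≤ x) :
    ∃ k : ℕ, x ≤ b ^ k ∧ M ^ k ≤ M * x ^ Real.logb b M := by
  obtain ⟨k, hk, hk'⟩ := exists_nat_pow_near hx hb
  refine ⟨k + 1, hk'.le, ?_⟩
  have hb₀ : 0 < b := one_pos.trans hb
  calc M ^ (k + 1) = M * (b ^ k) ^ Real.logb b M := by
        rw [← Real.rpow_natCast b k, ← Real.rpow_mul hb₀.le, mul_comm (k : ℝ), Real.rpow_mul hb₀.le,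
          Real.rpow_logb hb₀ hb.ne' (one_pos.trans hM), Real.rpow_natCast, pow_succ']
    _ ≤ M * x ^ Real.logb b M := by
        gcongr
        exact (Real.logb_pos hb hM).le

lemma exists_pow_le_mul_rpow_one_add_log {M P : ℝ} (hM : 1 < M) (hP : 0 < P) :
    ∃ C > (0 : ℝ), ∃ c > (0 : ℝ), ∀ δ : ℝ, 0 < δ → δ < 1 →
      ∃ k : ℕ, P * Real.exp (-(3 / 2) ^ k) ^ 2 < δ ∧ M ^ k ≤ C * (1 + Real.log (1 / δ)) ^ c := by
  have hc : 0 < Real.logb (3 / 2) M := Real.logb_pos (by norm_num) hM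
  refine ⟨M * (1 + |Real.log P|) ^ Real.logb (3 / 2) M, by positivity, _, hc, fun δ hδ hδ₁ => ?_⟩
  have hlog : 0 < Real.log (1 / δ) := Real.log_pos (one_lt_one_div hδ hδ₁)
  obtain ⟨k, hk, hMk⟩ := exists_le_pow_and_pow_le_mul_rpow (b := 3 / 2) (by norm_num) hM
    (x := (1 + |Real.log P|) * (1 + Real.log (1 / δ))) (by nlinarith [abs_nonneg (Real.log P)])
  refine ⟨k, ?_, ?_⟩
  · rw [← Real.log_lt_log_iff (by positivity) hδ, Real.log_mul hP.ne' (by positivity),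
      Real.log_pow, Real.log_exp]
    rw [one_div, Real.log_inv] at hk hlog
    push_cast
    nlinarith [abs_nonneg (Real.log P), le_abs_self (Real.log P)]
  · rwa [Real.mul_rpow (by positivity) (by positivity), ← mul_assoc] at hMk

lemma exists_norm_le_norm_inv_le (ρ : ℝ) :
    ∃ K > (0 : ℝ), ∀ A : SpecialLinearGroup ι 𝕜, ‖(A : Matrix ι ι 𝕜) - 1‖ ≤ ρ →
      ‖(A : Matrix ι ι 𝕜)‖ ≤ K ∧ ‖((A⁻¹ : SpecialLinearGroup ι 𝕜) : Matrix ι ι 𝕜)‖ ≤ K := by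
  have : ProperSpace (Matrix ι ι 𝕜) := FiniteDimensional.proper 𝕜 _
  obtain ⟨K, hK⟩ := (isCompact_closedBall (1 : Matrix ι ι 𝕜) ρ).exists_bound_of_continuousOn
    (f := fun A => (A, A.adjugate)) (continuous_id.prodMk (by fun_prop)).continuousOn
  refine ⟨max K 1, lt_max_of_lt_right one_pos, fun A hA => ?_⟩
  have := norm_prod_le_iff.1 (hK A (mem_closedBall_iff_norm.2 hA))
  exact ⟨this.1.trans (le_max_left _ _), this.2.trans (le_max_left _ _)⟩

lemma exists_norm_mul_inv_sub_one_le_of_norm_sub_le {r : ℝ} (hr : 0 < r) (ρ : ℝ) :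
    ∃ K > (0 : ℝ), ∃ ε > (0 : ℝ), ∀ V g : SpecialLinearGroup ι 𝕜,
      ‖(V : Matrix ι ι 𝕜) - 1‖ ≤ ρ → ‖(V : Matrix ι ι 𝕜) - g‖ ≤ ε →
        ‖(g : Matrix ι ι 𝕜)‖ ≤ K ∧
          ‖((V * g⁻¹ : SpecialLinearGroup ι 𝕜) : Matrix ι ι 𝕜) - 1‖ ≤ r := by
  obtain ⟨K, hK, hbound⟩ := exists_norm_le_norm_inv_le (ι := ι) (𝕜 := 𝕜) (1 + ρ)
  refine ⟨K, hK, min 1 (r / K), by positivity, fun V g hV hVg => ?_⟩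
  obtain ⟨hVg₁, hVgK⟩ := le_min_iff.1 hVg
  have hg : ‖(g : Matrix ι ι 𝕜) - 1‖ ≤ 1 + ρ :=
    calc ‖(g : Matrix ι ι 𝕜) - 1‖ ≤ ‖(g : Matrix ι ι 𝕜) - V‖ + ‖(V : Matrix ι ι 𝕜) - 1‖ :=
          norm_sub_le_norm_sub_add_norm_sub _ _ _
      _ ≤ 1 + ρ := add_le_add (by rwa [norm_sub_rev]) hV
  refine ⟨(hbound g hg).1, ?_⟩
  rw [coe_mul_inv_sub_one]
  calc _ ≤ r / K * K := (norm_mul_le _ _).trans (by gcongr; exact (hbound g hg).2)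
    _ = r := div_mul_cancel₀ r hK.ne'

theorem exists_mem_pow_norm_sub_lt {R : ℝ} (hR : 0 < R) :
    ∃ ε₀ > (0 : ℝ), ∃ C > (0 : ℝ), ∃ c > (0 : ℝ), ∀ 𝒢 : Set (SpecialLinearGroup ι 𝕜),
      𝒢⁻¹ = 𝒢 →
      (∀ V : SpecialLinearGroup ι 𝕜, ‖(V : Matrix ι ι 𝕜) - 1‖ < R →
        ∃ g ∈ 𝒢, ‖(V : Matrix ι ι 𝕜) - g‖ ≤ ε₀) →
      ∀ V : SpecialLinearGroup ι 𝕜, ‖(V : Matrix ι ι 𝕜) - 1‖ < R →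
      ∀ δ : ℝ, 0 < δ → δ < 1 →
        ∃ k : ℕ, (k : ℝ) ≤ C * (1 + Real.log (1 / δ)) ^ c ∧
          ∃ w ∈ 𝒢 ^ k, ‖(V : Matrix ι ι 𝕜) - w‖ < δ := by
  obtain ⟨r, hr, hr₁, hrR⟩ : ∃ r : ℝ, 0 < r ∧ r ≤ 1 / 4 ∧ r < R :=
    ⟨min (1 / 4) (R / 2), by positivity, min_le_left _ _,
      (min_le_right _ _).trans_lt (half_lt_self hR)⟩
  obtain ⟨m, Q, hQ, hpow⟩ := exists_isBallNet_pow_pow (ι := ι) (𝕜 := 𝕜) hr hr₁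
  obtain ⟨K, hK, ε₁, hε₁, htranslate⟩ :=
    exists_norm_mul_inv_sub_one_le_of_norm_sub_le (ι := ι) (𝕜 := 𝕜) hr R
  obtain ⟨C, hC, c, hc, hlength⟩ := exists_pow_le_mul_rpow_one_add_log (M := m + 2) (P := K / Q ^ 2)
    (by linarith [m.cast_nonneg (α := ℝ)]) (by positivity)
  refine ⟨min ε₁ ((Real.exp (-1) / Q) ^ 2), by positivity, 2 * C, by positivity, c, hc,
    fun 𝒢 h𝒢 hnet V hV δ hδ hδ₁ => ?_⟩
  have ballNet : IsBallNet 𝒢 r (min ε₁ ((Real.exp (-1) / Q) ^ 2)) :=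
    fun U hU => hnet U (hU.trans_lt hrR)
  obtain ⟨k, hkδ, hkC⟩ := hlength δ hδ hδ₁
  obtain ⟨g, hg, hVg⟩ := hnet V hV
  obtain ⟨hgK, hVg₁⟩ := htranslate V g hV.le (hVg.trans (min_le_left _ _))
  obtain ⟨w, hw, hVw⟩ := hpow 𝒢 h𝒢 (ballNet.mono (min_le_right _ _)) k _ hVg₁
  refine ⟨m ^ k + 1, ?_, w * g, pow_succ 𝒢 (m ^ k) ▸ Set.mul_mem_mul hw hg, ?_⟩
  · have hm : (m : ℝ) ^ k ≤ (m + 2) ^ k := by gcongr; linarith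
    have hone : (1 : ℝ) ≤ (m + 2) ^ k := one_le_pow₀ (by linarith [m.cast_nonneg (α := ℝ)])
    push_cast
    linarith
  · rw [coe_sub_coe_mul]
    calc _ ≤ (Real.exp (-(3 / 2) ^ k) / Q) ^ 2 * K := (norm_mul_le _ _).trans (by gcongr)
      _ = K / Q ^ 2 * Real.exp (-(3 / 2) ^ k) ^ 2 := by ring
      _ < δ := hkδ

lemma coe_inv_eq_inv {K : Type*} [CommRing K] (A : SpecialLinearGroup ι K) :
    ((A⁻¹ : SpecialLinearGroup ι K) : Matrix ι ι K) = (A : Matrix ι ι K)⁻¹ := by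
  rw [Matrix.SpecialLinearGroup.coe_inv, Matrix.inv_def, A.det_coe, Ring.inverse_one, one_smul]

theorem stmt15_general {R : ℝ} (hR : 0 < R) :
    ∃ ε₀ > (0 : ℝ), ∃ C > (0 : ℝ), ∃ c > (0 : ℝ),
      ∀ 𝒢 : Set (Matrix ι ι 𝕜),
        (∀ g ∈ 𝒢, g.det = 1) →
        (∀ g ∈ 𝒢, g⁻¹ ∈ 𝒢) →
        (∀ V : Matrix ι ι 𝕜, V.det = 1 → ‖V - 1‖ < R → ∃ g ∈ 𝒢, ‖V - g‖ ≤ ε₀) →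
        ∀ V : Matrix ι ι 𝕜, V.det = 1 → ‖V - 1‖ < R →
        ∀ δ : ℝ, 0 < δ → δ < 1 →
          ∃ L : List (Matrix ι ι 𝕜),
            (L.length : ℝ) ≤ C * (1 + Real.log (1 / δ)) ^ c ∧
            (∀ g ∈ L, g ∈ 𝒢) ∧
            ‖V - L.prod‖ < δ := by
  obtain ⟨ε₀, hε₀, C, hC, c, hc, h⟩ := exists_mem_pow_norm_sub_lt (ι := ι) (𝕜 := 𝕜) hR
  refine ⟨ε₀, hε₀, C, hC, c, hc, fun 𝒢 hdet hinv hnet V hV hVR δ hδ hδ₁ => ?_⟩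
  let S : Set (SpecialLinearGroup ι 𝕜) := {A | (A : Matrix ι ι 𝕜) ∈ 𝒢}
  have inv_S : S⁻¹ = S := Set.inv_eq_self_iff_inv_subset.2 fun A hA => by
    have := hinv ((A⁻¹ : SpecialLinearGroup ι 𝕜) : Matrix ι ι 𝕜) hA
    rwa [← coe_inv_eq_inv, inv_inv] at this
  have net_S (U : SpecialLinearGroup ι 𝕜) (hU : ‖(U : Matrix ι ι 𝕜) - 1‖ < R) :
      ∃ A ∈ S, ‖(U : Matrix ι ι 𝕜) - A‖ ≤ ε₀ :=
    let ⟨g, hg, hUg⟩ := hnet U U.det_coe hU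
    ⟨⟨g, hdet g hg⟩, hg, hUg⟩
  obtain ⟨k, hk, w, hw, hVw⟩ := h S inv_S net_S ⟨V, hV⟩ hVR δ hδ hδ₁
  obtain ⟨f, rfl⟩ := Set.mem_pow.1 hw
  refine ⟨List.ofFn fun i => (f i : Matrix ι ι 𝕜), by simpa using hk,
    List.forall_mem_ofFn_iff.2 fun i => (f i).2, ?_⟩
  have coe_prod := map_list_prod Matrix.SpecialLinearGroup.coeMonoidHom
    (List.ofFn fun i => (f i : SpecialLinearGroup ι 𝕜))
  rw [List.map_ofFn] at coe_prod
  exact (congrArg (‖V - ·‖) coe_prod).symm.trans_lt hVw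

end SolovayKitaev

/-- Non-unitary Solovay–Kitaev theorem (existence form): any `ε₀`-net `𝒢` of
`B_R = {V ∈ SL(n,ℂ) : ‖V − I‖ < R}` closed under inverses approximates each `V ∈ B_R`
to accuracy `δ` by a product of at most `C(1 + log(1/δ))^c` of its elements. -/
theorem stmt15 (n : ℕ) (hn : 2 ≤ n) (R : ℝ) (hR : 0 < R) :
    ∃ ε₀ > (0 : ℝ), ∃ C > (0 : ℝ), ∃ c > (0 : ℝ),
      ∀ 𝒢 : Finset (Matrix (Fin n) (Fin n) ℂ),
        (∀ g ∈ 𝒢, g.det = 1) →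
        (∀ g ∈ 𝒢, g⁻¹ ∈ 𝒢) →
        (∀ V : Matrix (Fin n) (Fin n) ℂ, V.det = 1 → opNorm (V - 1) < R →
          ∃ g ∈ 𝒢, opNorm (V - g) ≤ ε₀) →
        ∀ V : Matrix (Fin n) (Fin n) ℂ, V.det = 1 → opNorm (V - 1) < R →
        ∀ δ : ℝ, 0 < δ → δ < 1 →
          ∃ L : List (Matrix (Fin n) (Fin n) ℂ),
            (L.length : ℝ) ≤ C * (1 + Real.log (1 / δ)) ^ c ∧
            (∀ g ∈ L, g ∈ 𝒢) ∧
            opNorm (V - L.prod) < δ := by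
  obtain ⟨ε₀, hε₀, C, hC, c, hc, h⟩ := stmt15_general (ι := Fin n) (𝕜 := ℂ) hR
  exact ⟨ε₀, hε₀, C, hC, c, hc, fun 𝒢 => h 𝒢⟩
end

section
/- For every n ≥ 1 there exist constants C₁ > 0, C₂ > 0 and ε₀ > 0 (depending only on n) such that: for every ε with 0 < ε ≤ ε₀ and every real orthogonal n×n matrix A with det A = 1 and ‖A − I‖ ≤ ε, there exist invertible real n×n matrices V and W, each of determinant 1, with ‖V − I‖ ≤ C₁·ε^{1/2} and ‖W − I‖ ≤ C₁·ε^{1/2}, such that ‖ A − V W V⁻¹ W⁻¹ ‖ ≤ C₂·ε^{3/2}. -/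
/-- The operator norm (ℓ² → ℓ²) of a square real matrix. -/
noncomputable def opNormR {n : ℕ} (M : Matrix (Fin n) (Fin n) ℝ) : ℝ :=
  ‖Matrix.toEuclideanCLM (𝕜 := ℝ) M‖

/-!
A diagonal `V = 1 + O(t)` with determinant one and eigenvalues `v i` that are `t`-separated
solves every commutator equation `V * Y - Y * V = S` with `S` off-diagonal, by
`Y i j = S i j / (v i - v j)`; for `‖S‖ ≤ t ^ 2` this costs `‖Y‖ = O(t)`. Splitting `Y = L + U` into
strictly triangular parts, `W = (1 + L) * (1 + U)` has determinant one and differs from `1 + Y`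
by `L * U = O(t ^ 2)`, so that `V * W - W * V = S + O(t ^ 3)`. For matrices within `O(t)` of the
identity this ring commutator agrees with `V * W * V⁻¹ * W⁻¹ - 1` up to `O(t ^ 3)`.

Apply this with `t = √ε` to the off-diagonal part `S` of `A - 1`: the diagonal of `A - 1` is
negligible when `A` is orthogonal, because `2 - A - Aᵀ = (A - 1)ᵀ * (A - 1)`.
-/

open Matrix Finset
open scoped Matrix.Norms.L2Operator

section NormedRing

variable {R : Type*} [NormedRing R]

lemma norm_sub_one_le_of_mul_eq_one {v v' : R} {r : ℝ} (hr : r ≤ 1 / 2) (hv : ‖v - 1‖ ≤ r)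
    (h : v * v' = 1) : ‖v' - 1‖ ≤ 2 * r := by
  have key : -(v' - 1) = (v - 1) * (v' - 1) + (v - 1) := by
    linear_combination (norm := noncomm_ring) -h
  have bound : ‖v' - 1‖ ≤ r * ‖v' - 1‖ + r := by
    calc ‖v' - 1‖ = ‖(v - 1) * (v' - 1) + (v - 1)‖ := by rw [← norm_neg, key]
      _ ≤ ‖v - 1‖ * ‖v' - 1‖ + ‖v - 1‖ := norm_add_le_of_le (norm_mul_le _ _) le_rfl
      _ ≤ r * ‖v' - 1‖ + r := by gcongr
  nlinarith [norm_nonneg (v' - 1)]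

lemma norm_mul_sub_mul_le {x y : R} {a b : ℝ} (hx : ‖x‖ ≤ a) (hy : ‖y‖ ≤ b) :
    ‖x * y - y * x‖ ≤ 2 * a * b := by
  have ha : 0 ≤ a := (norm_nonneg x).trans hx
  calc ‖x * y - y * x‖ ≤ ‖x‖ * ‖y‖ + ‖y‖ * ‖x‖ :=
        norm_sub_le_of_le (norm_mul_le _ _) (norm_mul_le _ _)
    _ = 2 * ‖x‖ * ‖y‖ := by ring
    _ ≤ 2 * a * b := by gcongr

lemma norm_sub_ringCommutator_le {s v w y : R} {a b : ℝ} (hv : ‖v - 1‖ ≤ a)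
    (hw : ‖w - 1 - y‖ ≤ b) :
    ‖s - (v * w - w * v)‖ ≤ ‖s - (v * y - y * v)‖ + 2 * a * b := by
  have key : s - (v * w - w * v) = (s - (v * y - y * v)) -
      ((v - 1) * (w - 1 - y) - (w - 1 - y) * (v - 1)) := by noncomm_ring
  exact key ▸ norm_sub_le_of_le le_rfl (norm_mul_sub_mul_le hv hw)

lemma norm_sub_groupCommutator_le {a v w v' w' : R} {r : ℝ} (hr : r ≤ 1 / 2)
    (hv : ‖v - 1‖ ≤ r) (hw : ‖w - 1‖ ≤ r) (hvv' : v * v' = 1) (hww' : w * w' = 1) :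
    ‖a - v * w * v' * w'‖ ≤ ‖a - 1 - (v * w - w * v)‖ + 12 * r ^ 3 := by
  have hr0 : 0 ≤ r := (norm_nonneg _).trans hv
  have hv' : ‖v' - 1‖ ≤ 2 * r := norm_sub_one_le_of_mul_eq_one hr hv hvv'
  have hw' : ‖w' - 1‖ ≤ 2 * r := norm_sub_one_le_of_mul_eq_one hr hw hww'
  have hwv : w * v * (v' * w') = 1 := by rw [mul_assoc, ← mul_assoc v, hvv', one_mul, hww']
  have key : a - v * w * v' * w' = (a - 1 - (v * w - w * v)) -
      (v * w - w * v) * (v' * w' - 1) := by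
    linear_combination (norm := noncomm_ring) -hwv
  have comm : ‖v * w - w * v‖ ≤ 2 * r * r := by
    have : v * w - w * v = (v - 1) * (w - 1) - (w - 1) * (v - 1) := by noncomm_ring
    exact this ▸ norm_mul_sub_mul_le hv hw
  have inv : ‖v' * w' - 1‖ ≤ 6 * r := by
    calc ‖v' * w' - 1‖ = ‖(v' - 1) * (w' - 1) + ((v' - 1) + (w' - 1))‖ := by
          congr 1; noncomm_ring
      _ ≤ ‖v' - 1‖ * ‖w' - 1‖ + (‖v' - 1‖ + ‖w' - 1‖) :=
          norm_add_le_of_le (norm_mul_le _ _) (norm_add_le _ _)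
      _ ≤ 2 * r * (2 * r) + (2 * r + 2 * r) := by gcongr
      _ ≤ 6 * r := by nlinarith
  calc ‖a - v * w * v' * w'‖
      ≤ ‖a - 1 - (v * w - w * v)‖ + ‖v * w - w * v‖ * ‖v' * w' - 1‖ :=
        key ▸ norm_sub_le_of_le le_rfl (norm_mul_le _ _)
    _ ≤ ‖a - 1 - (v * w - w * v)‖ + 2 * r * r * (6 * r) := by gcongr
    _ = ‖a - 1 - (v * w - w * v)‖ + 12 * r ^ 3 := by ring

end NormedRing

section OperatorNorm

variable {m n ι 𝕜 : Type*} [Fintype m] [Fintype n] [DecidableEq n] [Fintype ι] [DecidableEq ι]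
  [RCLike 𝕜]

lemma norm_entry_le_l2_opNorm (A : Matrix m n 𝕜) (i : m) (j : n) : ‖A i j‖ ≤ ‖A‖ := by
  have col : ‖WithLp.toLp 2 (A.col j)‖ ≤ ‖A‖ := by
    simpa using A.l2_opNorm_mulVec (EuclideanSpace.single j 1)
  exact (PiLp.norm_apply_le (WithLp.toLp 2 (A.col j)) i).trans col

lemma l2_opNorm_single [DecidableEq m] (i : m) (j : n) (c : 𝕜) : ‖single i j c‖ = ‖c‖ := by
  have h : ‖single i j c‖ * ‖single i j c‖ = ‖c‖ * ‖c‖ := by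
    rw [← l2_opNorm_conjTranspose_mul_self, conjTranspose_single, single_mul_single_same,
      ← diagonal_single, l2_opNorm_diagonal, Pi.norm_single, norm_mul, norm_star]
  exact (mul_self_inj (norm_nonneg _) (norm_nonneg _)).1 h

lemma l2_opNorm_le_sum_norm (A : Matrix m n 𝕜) : ‖A‖ ≤ ∑ i, ∑ j, ‖A i j‖ := by
  classical
  calc ‖A‖ = ‖∑ i, ∑ j, single i j (A i j)‖ := by rw [← matrix_eq_sum_single]
    _ ≤ ∑ i, ∑ j, ‖single i j (A i j)‖ :=
        norm_sum_le_of_le _ fun i _ => norm_sum_le _ _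
    _ = ∑ i, ∑ j, ‖A i j‖ := by simp only [l2_opNorm_single]

lemma l2_opNorm_diagonal_le {d : ι → 𝕜} {r : ℝ} (hr : 0 ≤ r) (hd : ∀ i, ‖d i‖ ≤ r) :
    ‖diagonal d‖ ≤ r := by
  rw [l2_opNorm_diagonal]
  exact (pi_norm_le_iff_of_nonneg hr).2 hd

lemma abs_re_diag_sub_one_le_of_mem_unitaryGroup {A : Matrix ι ι 𝕜}
    (hA : A ∈ unitaryGroup ι 𝕜) (i : ι) :
    |RCLike.re (A i i) - 1| ≤ ‖A - 1‖ * √‖A - 1‖ := by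
  have linear : |RCLike.re (A i i) - 1| ≤ ‖A - 1‖ := by
    have := (RCLike.abs_re_le_norm _).trans (norm_entry_le_l2_opNorm (A - 1) i i)
    rwa [Matrix.sub_apply, one_apply_eq, map_sub, RCLike.one_re] at this
  have quadratic : 2 * |RCLike.re (A i i) - 1| ≤ ‖A - 1‖ * ‖A - 1‖ := by
    set G : Matrix ι ι 𝕜 := (A - 1)ᴴ * (A - 1) with hG
    have gram : G = 1 + 1 - A - Aᴴ := by
      have : Aᴴ * A = 1 := mem_unitaryGroup_iff'.1 hA
      rw [hG, conjTranspose_sub, conjTranspose_one]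
      linear_combination (norm := noncomm_ring) this
    have entry : RCLike.re (G i i) = -2 * (RCLike.re (A i i) - 1) := by
      simp only [gram, Matrix.sub_apply, Matrix.add_apply, one_apply_eq, conjTranspose_apply,
        map_sub, map_add, RCLike.one_re, RCLike.star_def, RCLike.conj_re]
      ring
    calc 2 * |RCLike.re (A i i) - 1| = |RCLike.re (G i i)| := by rw [entry, abs_mul]; norm_num
      _ ≤ ‖G‖ := (RCLike.abs_re_le_norm _).trans (norm_entry_le_l2_opNorm _ i i)
      _ = ‖A - 1‖ * ‖A - 1‖ := l2_opNorm_conjTranspose_mul_self _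
  -- the geometric mean of the two bounds
  refine (sq_le_sq₀ (abs_nonneg _) (by positivity)).1 ?_
  rw [mul_pow, Real.sq_sqrt (norm_nonneg _)]
  nlinarith [abs_nonneg (RCLike.re (A i i) - 1), norm_nonneg (A - 1)]

lemma norm_diag_sub_one_le_of_transpose_mul_self {A : Matrix ι ι ℝ}
    (hA : Aᵀ * A = 1) {ε : ℝ} (hε : ‖A - 1‖ ≤ ε) (i : ι) : ‖A i i - 1‖ ≤ ε * √ε := by
  have hε0 : 0 ≤ ε := (norm_nonneg _).trans hε
  calc ‖A i i - 1‖ ≤ ‖A - 1‖ * √‖A - 1‖ :=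
        abs_re_diag_sub_one_le_of_mem_unitaryGroup ((mem_orthogonalGroup_iff' ι ℝ).2 hA) i
    _ ≤ ε * √ε := by gcongr

lemma opNormR_eq_l2_opNorm {n : ℕ} (M : Matrix (Fin n) (Fin n) ℝ) : opNormR M = ‖M‖ := rfl

end OperatorNorm

section SeparatedEigenvalues

lemma exp_mul_abs_sub_le_abs_exp_sub_exp {a x y : ℝ} (hx : a ≤ x) (hy : a ≤ y) :
    Real.exp a * |x - y| ≤ |Real.exp x - Real.exp y| := by
  wlog hyx : y ≤ x generalizing x y
  · rw [abs_sub_comm x, abs_sub_comm (Real.exp x)]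
    exact this hy hx (le_of_not_ge hyx)
  have convex : Real.exp y * (x - y) ≤ Real.exp x - Real.exp y := by
    have : Real.exp x = Real.exp y * Real.exp (x - y) := by rw [← Real.exp_add]; congr 1; ring
    nlinarith [Real.add_one_le_exp (x - y), Real.exp_pos y]
  calc Real.exp a * |x - y| = Real.exp a * (x - y) := by rw [abs_of_nonneg (sub_nonneg.2 hyx)]
    _ ≤ Real.exp y * (x - y) := by have := sub_nonneg.2 hyx; gcongr
    _ ≤ |Real.exp x - Real.exp y| := convex.trans (le_abs_self _)

variable (ι : Type*) [Fintype ι]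

lemma exists_sum_eq_zero_separated :
    ∃ d : ι → ℝ, ∑ i, d i = 0 ∧ (∀ i, |d i| ≤ 1) ∧
      ∀ i j, i ≠ j → 1 ≤ Fintype.card ι * |d i - d j| := by
  set N := Fintype.card ι
  let e : ι ≃ Fin N := Fintype.equivFin ι
  have odd_sum : ∀ k : ℕ, ∑ i ∈ range k, (2 * (i : ℝ) + 1) = k ^ 2 := fun k => by
    induction k with
    | zero => simp
    | succ k ih => rw [sum_range_succ, ih]; push_cast; ring
  have hN : ∀ _ : ι, (0 : ℝ) < N := fun i => Nat.cast_pos.2 (Fintype.card_pos_iff.2 ⟨i⟩)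
  refine ⟨fun i => (2 * (e i : ℝ) + 1 - N) / N, ?_, fun i => ?_, fun i j hij => ?_⟩
  · rw [← sum_div, e.sum_comp fun k : Fin N => 2 * (k : ℝ) + 1 - N, sum_sub_distrib,
      Fin.sum_univ_eq_sum_range fun k : ℕ => 2 * (k : ℝ) + 1, odd_sum]
    simp [sq]
  · have : (e i : ℝ) + 1 ≤ N := mod_cast (e i).is_lt
    rw [abs_div, abs_of_pos (hN i), div_le_one (hN i), abs_le]
    constructor <;> linarith [Nat.cast_nonneg (α := ℝ) (e i)]
  · have gap : (1 : ℝ) ≤ |(e i : ℝ) - e j| := by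
      have : ((e i : ℕ) : ℤ) - (e j : ℕ) ≠ 0 :=
        sub_ne_zero.2 (Nat.cast_injective.ne (Fin.val_injective.ne (e.injective.ne hij)))
      have := Int.cast_mono (R := ℝ) (Int.one_le_abs this)
      push_cast at this
      exact this
    have hN0 := hN i
    calc (1 : ℝ) ≤ 2 * |(e i : ℝ) - e j| := by linarith
      _ = |N * ((2 * (e i : ℝ) + 1 - N) / N - (2 * (e j : ℝ) + 1 - N) / N)| := by
        rw [← abs_two, ← abs_mul]; congr 1; field_simp; ring
      _ = N * |(2 * (e i : ℝ) + 1 - N) / N - (2 * (e j : ℝ) + 1 - N) / N| := by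
        rw [abs_mul, abs_of_pos hN0]

lemma exists_prod_eq_one_separated :
    ∃ K ≥ (1 : ℝ), ∀ t : ℝ, 0 ≤ t → t ≤ 1 → ∃ v : ι → ℝ, ∏ i, v i = 1 ∧
      (∀ i, |v i - 1| ≤ K * t) ∧ ∀ i j, i ≠ j → t ≤ K * |v i - v j| := by
  obtain ⟨d, hsum, hd, hsep⟩ := exists_sum_eq_zero_separated ι
  set N : ℝ := (Fintype.card ι : ℝ)
  have hN : 0 ≤ Real.exp 1 * N := by positivity
  refine ⟨Real.exp 1 * N + 2, by linarith, fun t ht ht1 => ⟨fun i => Real.exp (t * d i), ?_,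
    fun i => ?_, fun i j hij => ?_⟩⟩
  · rw [← Real.exp_sum, ← mul_sum, hsum, mul_zero, Real.exp_zero]
  · have htd : |t * d i| ≤ t := by
      rw [abs_mul, abs_of_nonneg ht]; exact mul_le_of_le_one_right ht (hd i)
    calc |Real.exp (t * d i) - 1| ≤ 2 * |t * d i| := Real.abs_exp_sub_one_le (htd.trans ht1)
      _ ≤ (Real.exp 1 * N + 2) * t := by gcongr; linarith
  · have hlow : ∀ i, -1 ≤ t * d i := fun i => by nlinarith [neg_le_of_abs_le (hd i)]
    calc t = t * 1 := (mul_one t).symm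
      _ ≤ t * (N * |d i - d j|) := by gcongr; exact hsep i j hij
      _ = N * |t * d i - t * d j| := by rw [← mul_sub, abs_mul, abs_of_nonneg ht]; ring
      _ = Real.exp 1 * N * (Real.exp (-1) * |t * d i - t * d j|) := by
        rw [Real.exp_neg]; field_simp
      _ ≤ (Real.exp 1 * N + 2) * |Real.exp (t * d i) - Real.exp (t * d j)| := by
        gcongr
        · linarith
        · exact exp_mul_abs_sub_le_abs_exp_sub_exp (hlow i) (hlow j)

end SeparatedEigenvalues

section TriangularFactors

variable {ι R : Type*} [LinearOrder ι]

/-- The part of a square matrix strictly below the diagonal, the lower half of the splitting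
`Y = L + U` of a matrix with zero diagonal. -/
def strictLowerPart [Zero R] (Y : Matrix ι ι R) : Matrix ι ι R :=
  of fun i j => if j < i then Y i j else 0

/-- The part of a square matrix strictly above the diagonal, the upper half of the splitting
`Y = L + U` of a matrix with zero diagonal. -/
def strictUpperPart [Zero R] (Y : Matrix ι ι R) : Matrix ι ι R :=
  of fun i j => if i < j then Y i j else 0

lemma strictLowerPart_add_strictUpperPart [AddZeroClass R] {Y : Matrix ι ι R}
    (hY : ∀ i, Y i i = 0) : strictLowerPart Y + strictUpperPart Y = Y := by
  ext i j
  rcases lt_trichotomy i j with h | rfl | h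
  · simp [strictLowerPart, strictUpperPart, h, h.not_gt]
  · simp [strictLowerPart, strictUpperPart, hY]
  · simp [strictLowerPart, strictUpperPart, h, h.not_gt]

variable [Fintype ι]

lemma det_one_add_strictLowerPart [CommRing R] (Y : Matrix ι ι R) :
    (1 + strictLowerPart Y).det = 1 := by
  have lower : (strictLowerPart Y).IsLowerTriangular := fun i j (hij : i < j) => by
    simp [strictLowerPart, hij.not_gt]
  rw [det_of_isLowerTriangular _ (blockTriangular_one.add lower)]
  simp [strictLowerPart]

lemma det_one_add_strictUpperPart [CommRing R] (Y : Matrix ι ι R) :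
    (1 + strictUpperPart Y).det = 1 := by
  have upper : (strictUpperPart Y).IsUpperTriangular := fun i j (hij : j < i) => by
    simp [strictUpperPart, hij.not_gt]
  rw [det_of_isUpperTriangular (blockTriangular_one.add upper)]
  simp [strictUpperPart]

variable {𝕜 : Type*} [RCLike 𝕜]

lemma l2_opNorm_strictLowerPart_le (Y : Matrix ι ι 𝕜) :
    ‖strictLowerPart Y‖ ≤ ∑ i, ∑ j, ‖Y i j‖ := by
  refine (l2_opNorm_le_sum_norm _).trans (sum_le_sum fun i _ => sum_le_sum fun j _ => ?_)
  by_cases h : j < i <;> simp [strictLowerPart, h]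

lemma l2_opNorm_strictUpperPart_le (Y : Matrix ι ι 𝕜) :
    ‖strictUpperPart Y‖ ≤ ∑ i, ∑ j, ‖Y i j‖ := by
  refine (l2_opNorm_le_sum_norm _).trans (sum_le_sum fun i _ => sum_le_sum fun j _ => ?_)
  by_cases h : i < j <;> simp [strictUpperPart, h]

end TriangularFactors

section CommutatorEquation

variable {ι 𝕜 : Type*} [Fintype ι] [DecidableEq ι]

lemma exists_det_eq_one_norm_sub_one_sub_le [RCLike 𝕜] {Y : Matrix ι ι 𝕜}
    (hY : ∀ i, Y i i = 0) :
    ∃ W : Matrix ι ι 𝕜, W.det = 1 ∧ ‖W - 1 - Y‖ ≤ (∑ i, ∑ j, ‖Y i j‖) ^ 2 := by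
  obtain ⟨order⟩ : Nonempty (LinearOrder ι) :=
    ⟨LinearOrder.lift' _ (Fintype.equivFin ι).injective⟩
  obtain rfl : ‹DecidableEq ι› = order.toDecidableEq := Subsingleton.elim _ _
  set L := strictLowerPart Y
  set U := strictUpperPart Y
  have hLU : L + U = Y := strictLowerPart_add_strictUpperPart hY
  have remainder : (1 + L) * (1 + U) - 1 - Y = L * U := by
    rw [← hLU]; noncomm_ring
  refine ⟨(1 + L) * (1 + U), ?_, ?_⟩
  · rw [det_mul, det_one_add_strictLowerPart Y, det_one_add_strictUpperPart Y, one_mul]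
  · rw [remainder, sq]
    exact norm_mul_le_of_le (l2_opNorm_strictLowerPart_le Y) (l2_opNorm_strictUpperPart_le Y)

/-- The solution `Y` with zero diagonal of the commutator equation
`diagonal v * Y - Y * diagonal v = S`, for `v` injective and `S` with zero diagonal. Since
`x / 0 = 0`, the diagonal of `Y` vanishes for every `S`. -/
def diagonalCommutatorSolution [Field 𝕜] (v : ι → 𝕜) (S : Matrix ι ι 𝕜) : Matrix ι ι 𝕜 :=
  of fun i j => S i j / (v i - v j)

lemma diagonal_commutator_diagonalCommutatorSolution [Field 𝕜] {v : ι → 𝕜}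
    (hv : Function.Injective v) (S : Matrix ι ι 𝕜) :
    diagonal v * diagonalCommutatorSolution v S - diagonalCommutatorSolution v S * diagonal v =
      S - diagonal S.diag := by
  ext i j
  rcases eq_or_ne i j with rfl | hij
  · simp [diagonalCommutatorSolution]
  · have : v i - v j ≠ 0 := sub_ne_zero.2 (hv.ne hij)
    simp only [diagonalCommutatorSolution, Matrix.sub_apply, diagonal_mul, mul_diagonal, of_apply,
      diagonal_apply_ne _ hij]
    field_simp
    ring

lemma sum_norm_diagonalCommutatorSolution_le [RCLike 𝕜] {v : ι → 𝕜} {S : Matrix ι ι 𝕜}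
    {K t : ℝ} (hK : 0 ≤ K) (ht : 0 < t) (hv : ∀ i j, i ≠ j → t ≤ K * ‖v i - v j‖)
    (hS : ‖S‖ ≤ t ^ 2) :
    ∑ i, ∑ j, ‖diagonalCommutatorSolution v S i j‖ ≤ Fintype.card ι ^ 2 * K * t := by
  have entry : ∀ i j, ‖diagonalCommutatorSolution v S i j‖ ≤ K * t := fun i j => by
    rcases eq_or_ne i j with rfl | hij
    · simpa [diagonalCommutatorSolution] using mul_nonneg hK ht.le
    · have hsep := hv i j hij
      have hpos : 0 < ‖v i - v j‖ := pos_of_mul_pos_right (ht.trans_le hsep) hK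
      rw [diagonalCommutatorSolution, of_apply, norm_div, div_le_iff₀ hpos]
      calc ‖S i j‖ ≤ t * t := ((norm_entry_le_l2_opNorm S i j).trans hS).trans_eq (sq t)
        _ ≤ t * (K * ‖v i - v j‖) := by gcongr
        _ = K * t * ‖v i - v j‖ := by ring
  calc ∑ i, ∑ j, ‖diagonalCommutatorSolution v S i j‖ ≤ ∑ _i : ι, ∑ _j : ι, K * t :=
        sum_le_sum fun i _ => sum_le_sum fun j _ => entry i j
    _ = Fintype.card ι ^ 2 * K * t := by simp [sq, mul_assoc]

variable (ι 𝕜) [RCLike 𝕜]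

lemma exists_det_eq_one_diagonal_separated :
    ∃ K ≥ (1 : ℝ), ∀ t : ℝ, 0 < t → t ≤ 1 → ∃ v : ι → 𝕜, Function.Injective v ∧
      (diagonal v).det = 1 ∧ ‖diagonal v - 1‖ ≤ K * t ∧
      ∀ i j, i ≠ j → t ≤ K * ‖v i - v j‖ := by
  obtain ⟨K, hK, hexists⟩ := exists_prod_eq_one_separated ι
  refine ⟨K, hK, fun t ht ht1 => ?_⟩
  obtain ⟨v, hprod, hone, hsep⟩ := hexists t ht.le ht1
  refine ⟨fun i => (v i : 𝕜), fun i j hij => ?_, ?_, ?_, fun i j hij => ?_⟩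
  · by_contra hne
    have : v i = v j := RCLike.ofReal_injective hij
    simpa [this, ht.not_ge] using hsep i j hne
  · rw [det_diagonal, ← RCLike.ofReal_prod, hprod, RCLike.ofReal_one]
  · rw [← diagonal_one, diagonal_sub]
    refine l2_opNorm_diagonal_le (by positivity) fun i => ?_
    rw [← RCLike.ofReal_one, ← RCLike.ofReal_sub, RCLike.norm_ofReal]
    exact hone i
  · rw [← RCLike.ofReal_sub, RCLike.norm_ofReal]
    exact hsep i j hij

lemma exists_det_eq_one_norm_sub_ringCommutator_le :
    ∃ C ≥ (1 : ℝ), ∀ t : ℝ, 0 < t → t ≤ 1 → ∀ S : Matrix ι ι 𝕜,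
      ‖S‖ ≤ t ^ 2 → (∀ i, ‖S i i‖ ≤ t ^ 3) →
      ∃ V W : Matrix ι ι 𝕜, V.det = 1 ∧ W.det = 1 ∧
        ‖V - 1‖ ≤ C * t ∧ ‖W - 1‖ ≤ C * t ∧ ‖S - (V * W - W * V)‖ ≤ C * t ^ 3 := by
  obtain ⟨K, hK, hexists⟩ := exists_det_eq_one_diagonal_separated ι 𝕜
  set M : ℝ := Fintype.card ι ^ 2 * K
  have hM : 0 ≤ M := by positivity
  have hKM : 0 ≤ 2 * K * M ^ 2 := by positivity
  refine ⟨1 + K + M + M ^ 2 + 2 * K * M ^ 2, by linarith [sq_nonneg M],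
    fun t ht ht1 S hS hSdiag => ?_⟩
  obtain ⟨v, hinj, hdet, hv, hsep⟩ := hexists t ht ht1
  set V := diagonal v
  set Y := diagonalCommutatorSolution v S with hYdef
  have hY : ∑ i, ∑ j, ‖Y i j‖ ≤ M * t :=
    sum_norm_diagonalCommutatorSolution_le (by linarith) ht hsep hS
  obtain ⟨W, hWdet, hW⟩ := exists_det_eq_one_norm_sub_one_sub_le (Y := Y)
    fun i => by simp [hYdef, diagonalCommutatorSolution]
  have hWY : ‖W - 1 - Y‖ ≤ (M * t) ^ 2 := hW.trans (by gcongr)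
  refine ⟨V, W, hdet, hWdet, hv.trans ?_, ?_, ?_⟩
  · gcongr
    linarith [sq_nonneg M]
  · calc ‖W - 1‖ = ‖(W - 1 - Y) + Y‖ := by rw [sub_add_cancel]
      _ ≤ (M * t) ^ 2 + M * t := norm_add_le_of_le hWY ((l2_opNorm_le_sum_norm Y).trans hY)
      _ ≤ M ^ 2 * t + M * t := by rw [mul_pow]; gcongr; exact pow_le_of_le_one ht.le ht1 two_ne_zero
      _ ≤ (1 + K + M + M ^ 2 + 2 * K * M ^ 2) * t := by
        linarith [show 0 ≤ (1 + K + 2 * K * M ^ 2) * t by positivity]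
  · calc ‖S - (V * W - W * V)‖ ≤ ‖S - (V * Y - Y * V)‖ + 2 * (K * t) * (M * t) ^ 2 :=
          norm_sub_ringCommutator_le hv hWY
      _ = ‖diagonal S.diag‖ + 2 * (K * t) * (M * t) ^ 2 := by
        rw [diagonal_commutator_diagonalCommutatorSolution hinj, sub_sub_cancel]
      _ ≤ t ^ 3 + 2 * (K * t) * (M * t) ^ 2 := by
        gcongr
        exact l2_opNorm_diagonal_le (by positivity) hSdiag
      _ = (1 + 2 * K * M ^ 2) * t ^ 3 := by ring
      _ ≤ (1 + K + M + M ^ 2 + 2 * K * M ^ 2) * t ^ 3 := by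
        gcongr
        linarith [sq_nonneg M]

end CommutatorEquation

theorem stmt19_general (ι 𝕜 : Type*) [Fintype ι] [DecidableEq ι] [RCLike 𝕜] :
    ∃ C₁ > (0 : ℝ), ∃ C₂ > (0 : ℝ), ∃ ε₀ > (0 : ℝ),
      ∀ ε : ℝ, 0 < ε → ε ≤ ε₀ →
      ∀ A : Matrix ι ι 𝕜,
        (∀ i, ‖A i i - 1‖ ≤ ε * √ε) →
        ‖A - 1‖ ≤ ε →
        ∃ V W : Matrix ι ι 𝕜,
          V.det = 1 ∧ W.det = 1 ∧
          ‖V - 1‖ ≤ C₁ * √ε ∧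
          ‖W - 1‖ ≤ C₁ * √ε ∧
          ‖A - V * W * V⁻¹ * W⁻¹‖ ≤ C₂ * (ε * √ε) := by
  obtain ⟨C, hC, hexists⟩ := exists_det_eq_one_norm_sub_ringCommutator_le ι 𝕜
  refine ⟨C, by positivity, C + 12 * C ^ 3, by positivity, (1 / (2 * C)) ^ 2, by positivity,
    fun ε hε hε₀ A hdiag hA => ?_⟩
  have hpow : √ε ^ 3 = ε * √ε := by rw [pow_succ, Real.sq_sqrt hε.le]
  have hsmall : √ε ≤ 1 / (2 * C) := (Real.sqrt_le_left (by positivity)).2 hε₀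
  have hCt : C * √ε ≤ 1 / 2 := by
    calc C * √ε ≤ C * (1 / (2 * C)) := by gcongr
      _ = 1 / 2 := by field_simp
  have hle_one : √ε ≤ 1 := by nlinarith [Real.sqrt_nonneg ε]
  obtain ⟨V, W, hVdet, hWdet, hV, hW, hcomm⟩ := hexists √ε (Real.sqrt_pos.2 hε) hle_one (A - 1)
    (by rwa [Real.sq_sqrt hε.le]) (fun i => by simpa [hpow] using hdiag i)
  refine ⟨V, W, hVdet, hWdet, hV, hW, ?_⟩
  calc ‖A - V * W * V⁻¹ * W⁻¹‖ ≤ ‖A - 1 - (V * W - W * V)‖ + 12 * (C * √ε) ^ 3 :=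
        norm_sub_groupCommutator_le hCt hV hW (mul_nonsing_inv V (by simp [hVdet]))
          (mul_nonsing_inv W (by simp [hWdet]))
    _ ≤ C * √ε ^ 3 + 12 * (C * √ε) ^ 3 := by gcongr
    _ = (C + 12 * C ^ 3) * (ε * √ε) := by rw [← hpow]; ring

/-- Every special orthogonal matrix `A` with `‖A − I‖ ≤ ε` is, up to error
`C₂ ε^{3/2}`, a group commutator of two determinant-one real matrices at distance at
most `C₁ ε^{1/2}` from the identity. -/
theorem stmt19 (n : ℕ) (hn : 1 ≤ n) :
    ∃ C₁ > (0 : ℝ), ∃ C₂ > (0 : ℝ), ∃ ε₀ > (0 : ℝ),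
      ∀ ε : ℝ, 0 < ε → ε ≤ ε₀ →
      ∀ A : Matrix (Fin n) (Fin n) ℝ,
        Matrix.transpose A * A = 1 → A.det = 1 →
        opNormR (A - 1) ≤ ε →
        ∃ V W : Matrix (Fin n) (Fin n) ℝ,
          V.det = 1 ∧ W.det = 1 ∧
          opNormR (V - 1) ≤ C₁ * Real.sqrt ε ∧
          opNormR (W - 1) ≤ C₁ * Real.sqrt ε ∧
          opNormR (A - V * W * V⁻¹ * W⁻¹) ≤ C₂ * (ε * Real.sqrt ε) := by
  simp only [opNormR_eq_l2_opNorm]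
  obtain ⟨C₁, hC₁, C₂, hC₂, ε₀, hε₀, h⟩ := stmt19_general (Fin n) ℝ
  exact ⟨C₁, hC₁, C₂, hC₂, ε₀, hε₀, fun ε hε hle A hA _ hAε =>
    h ε hε hle A (norm_diag_sub_one_le_of_transpose_mul_self hA hAε) hAε⟩
end
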